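/- arXiv:0712.2940 — 2 statements merged into one kernel-verified Lean document; each statement's English description precedes it below -/
import Mathlib

section
/- Let −∞ ≤ a < 0 < b ≤ +∞ and let τ : ℝ → ℝ be a continuous nonnegative function such that τ(x) > 0 if, and only if, x ∈ (a,b), and such that ∫₀^b (y/τ(y)) dy = +∞ and ∫_a^0 (y/τ(y)) dy = −∞. Then there exists a unique (up to Lebesgue-null sets) probability density p on ℝ whose support coincides with (a,b) and such that ∫ y p(y) dy = 0 and τ(x) = (∫_x^{+∞} y p(y) dy)/p(x) for every x ∈ (a,b); explicitly, p(x) = C^{-1} exp(−∫₀^x (y/τ(y)) dy)/τ(x) for x ∈ (a,b) and p(x) = 0 otherwise, where C = ∫_a^b exp(−∫₀^x (y/τ(y)) dy)/τ(x) dx (with the convention ∫₀^x = −∫_x^0 for x < 0). -/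
open MeasureTheory Real Set

open Filter Topology

/-!
Write `S = (a, b)`, `E x = exp (-∫₀ˣ y / τ y dy)` and `r = E / τ`. Then `E' x = -(x * r x)` on `S`,
and the divergence of the two integrals makes `E` vanish at both ends of `S`. Since `x * r x` has
the sign of `x`, the integral of `|x * r x|` over `[u, v] ∋ 0` is `2 - E u - E v ≤ 2`, so `x * r x`
is integrable on `S`. Hence its total integral is `0` and its tail integral is `E = τ * r`.

Conversely, if `q` solves the tail equation on `S`, then `G x = ∫ₓ^∞ y * q y dy = τ x * q x`
satisfies `G' = -(x * q x)`, so `G` and `E` have the same logarithmic derivative `-x / τ x`. They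
are therefore proportional, `q` is a multiple of `r`, and `∫ q = 1` determines the factor.

The ends of `S`, finite or not, are reached through the filters `atBot` and `atTop` on the subtype.
-/

section ExhaustionOfSets

variable {α : Type*} [MeasurableSpace α] [Preorder α] [TopologicalSpace α]
  [OrderClosedTopology α] [OpensMeasurableSpace α] {μ : Measure α} {S : Set α}

lemma aecover_coe_Iic (hS : MeasurableSet S) :
    AECover (μ.restrict S) atTop (fun v : S => Iic (v : α)) :=
  aecover_restrict_of_ae_imp hS (ae_of_all _ fun x hx => eventually_ge_atTop (⟨x, hx⟩ : S))
    fun _ => measurableSet_Iic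

lemma aecover_coe_Ici (hS : MeasurableSet S) :
    AECover (μ.restrict S) atBot (fun u : S => Ici (u : α)) :=
  aecover_coe_Iic (α := αᵒᵈ) hS

lemma aecover_coe_Icc (hS : MeasurableSet S) :
    AECover (μ.restrict S) (atBot ×ˢ atTop) (fun w : S × S => Icc (w.1 : α) w.2) :=
  ((aecover_coe_Ici hS).comp_tendsto tendsto_fst).inter
    ((aecover_coe_Iic hS).comp_tendsto tendsto_snd)

end ExhaustionOfSets

lemma tendsto_setIntegral_atTop_of_lintegral_eq_top {α ι : Type*} [MeasurableSpace α]
    {μ : Measure α} {l : Filter ι} [l.NeBot] [l.IsCountablyGenerated] {φ : ι → Set α}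
    (hφ : AECover μ l φ) {f : α → ℝ} (hf : ∀ i, IntegrableOn f (φ i) μ) (hf0 : 0 ≤ᵐ[μ] f)
    (htop : ∫⁻ x, ENNReal.ofReal (f x) ∂μ = ⊤) :
    Tendsto (fun i => ∫ x in φ i, f x ∂μ) l atTop := by
  have hfm : AEMeasurable f μ := hφ.aemeasurable fun i => (hf i).aemeasurable
  have hlim := hφ.lintegral_tendsto_of_countably_generated hfm.ennreal_ofReal
  rw [htop] at hlim
  refine ENNReal.tendsto_ofReal_nhds_top.1 (hlim.congr fun i => ?_)
  rw [ofReal_integral_eq_lintegral_ofReal (hf i) (ae_restrict_of_ae hf0)]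

section OrdConnected

variable {S : Set ℝ} [hS : S.OrdConnected] {c : ℝ} {μ : Measure ℝ}

lemma restrict_inter_Ioi_restrict_Iic (hc : c ∈ S) {v : ℝ} (hv : v ∈ S) :
    (μ.restrict (S ∩ Ioi c)).restrict (Iic v) = μ.restrict (Ioc c v) := by
  rw [Measure.restrict_restrict measurableSet_Iic]
  congr 1
  ext x
  exact ⟨fun h => ⟨h.2.2, h.1⟩, fun h => ⟨h.2, hS.out hc hv (Ioc_subset_Icc_self h), h.1⟩⟩

lemma restrict_inter_Iio_restrict_Ici (hc : c ∈ S) {u : ℝ} (hu : u ∈ S) :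
    (μ.restrict (S ∩ Iio c)).restrict (Ici u) = μ.restrict (Ico u c) := by
  rw [Measure.restrict_restrict measurableSet_Ici]
  congr 1
  ext x
  exact ⟨fun h => ⟨h.1, h.2.2⟩, fun h => ⟨h.1, hS.out hu hc (Ico_subset_Icc_self h), h.2⟩⟩

lemma aecover_inter_Ioi_coe_Iic :
    AECover (μ.restrict (S ∩ Ioi c)) atTop (fun v : S => Iic (v : ℝ)) :=
  (aecover_coe_Iic hS.measurableSet).mono (Measure.restrict_mono inter_subset_left le_rfl)

lemma aecover_inter_Iio_coe_Ici :
    AECover (μ.restrict (S ∩ Iio c)) atBot (fun u : S => Ici (u : ℝ)) :=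
  (aecover_coe_Ici hS.measurableSet).mono (Measure.restrict_mono inter_subset_left le_rfl)

lemma tendsto_intervalIntegral_atTop_of_lintegral_eq_top (hc : c ∈ S) {f : ℝ → ℝ}
    (hf : ∀ v ∈ S, IntervalIntegrable f μ c v) (hf0 : ∀ x ∈ S ∩ Ioi c, 0 ≤ f x)
    (htop : ∫⁻ x in S ∩ Ioi c, ENNReal.ofReal (f x) ∂μ = ⊤) :
    Tendsto (fun v : S => ∫ x in c..v, f x ∂μ) atTop atTop := by
  have : Nonempty S := ⟨⟨c, hc⟩⟩
  refine (tendsto_setIntegral_atTop_of_lintegral_eq_top aecover_inter_Ioi_coe_Iic (fun v => ?_)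
    (ae_restrict_of_forall_mem (hS.measurableSet.inter measurableSet_Ioi) hf0) htop).congr' ?_
  · rw [IntegrableOn, restrict_inter_Ioi_restrict_Iic hc v.2]
    exact (hf v v.2).1
  · filter_upwards [eventually_ge_atTop ⟨c, hc⟩] with v hcv
    rw [restrict_inter_Ioi_restrict_Iic hc v.2, intervalIntegral.integral_of_le hcv]

lemma tendsto_intervalIntegral_atBot_of_lintegral_eq_top [NullSingletonClass μ] (hc : c ∈ S)
    {f : ℝ → ℝ} (hf : ∀ u ∈ S, IntervalIntegrable f μ u c) (hf0 : ∀ x ∈ S ∩ Iio c, 0 ≤ f x)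
    (htop : ∫⁻ x in S ∩ Iio c, ENNReal.ofReal (f x) ∂μ = ⊤) :
    Tendsto (fun u : S => ∫ x in u..c, f x ∂μ) atBot atTop := by
  have : Nonempty S := ⟨⟨c, hc⟩⟩
  refine (tendsto_setIntegral_atTop_of_lintegral_eq_top aecover_inter_Iio_coe_Ici (fun u => ?_)
    (ae_restrict_of_forall_mem (hS.measurableSet.inter measurableSet_Iio) hf0) htop).congr' ?_
  · rw [IntegrableOn, restrict_inter_Iio_restrict_Ici hc u.2, ← IntegrableOn,
      integrableOn_Ico_iff_integrableOn_Ioo,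
      ← integrableOn_Ioc_iff_integrableOn_Ioo]
    exact (hf u u.2).1
  · filter_upwards [eventually_le_atBot ⟨c, hc⟩] with u huc
    rw [restrict_inter_Iio_restrict_Ici hc u.2, integral_Ico_eq_integral_Ioc,
      intervalIntegral.integral_of_le huc]

variable {E : Type*} [NormedAddCommGroup E] {f F : ℝ → E}

lemma integrableOn_of_intervalIntegral_norm_le [NullSingletonClass μ] (hc : c ∈ S)
    (hf : ∀ u ∈ S, ∀ v ∈ S, IntervalIntegrable f μ u v) (I : ℝ)
    (hI : ∀ u ∈ S, ∀ v ∈ S, u ≤ c → c ≤ v → ∫ x in u..v, ‖f x‖ ∂μ ≤ I) :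
    IntegrableOn f S μ := by
  have : Nonempty S := ⟨⟨c, hc⟩⟩
  refine (aecover_coe_Icc hS.measurableSet).integrable_of_integral_norm_bounded I (fun w => ?_) ?_
  · rw [IntegrableOn, Measure.restrict_restrict_of_subset (hS.out w.1.2 w.2.2), ← IntegrableOn,
      integrableOn_Icc_iff_integrableOn_Ioc]
    exact (hf _ w.1.2 _ w.2.2).1
  · filter_upwards [(eventually_le_atBot ⟨c, hc⟩).prod_mk (eventually_ge_atTop ⟨c, hc⟩)]
      with w hw
    rw [Measure.restrict_restrict_of_subset (hS.out w.1.2 w.2.2), integral_Icc_eq_integral_Ioc,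
      ← intervalIntegral.integral_of_le (hw.1.trans hw.2)]
    exact hI _ w.1.2 _ w.2.2 hw.1 hw.2

variable [NormedSpace ℝ E] [CompleteSpace E]

lemma setIntegral_inter_Ioi_of_hasDerivAt_of_tendsto (hc : c ∈ S)
    (hderiv : ∀ x ∈ S, HasDerivAt F (f x) x) (hf : IntegrableOn f S) {l : E}
    (htop : Tendsto (fun v : S => F v) atTop (𝓝 l)) :
    ∫ x in S ∩ Ioi c, f x = l - F c := by
  have : Nonempty S := ⟨⟨c, hc⟩⟩
  refine aecover_inter_Ioi_coe_Iic.integral_eq_of_tendsto _ (hf.mono_set inter_subset_left)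
    ((htop.sub_const (F c)).congr' ?_)
  filter_upwards [eventually_ge_atTop ⟨c, hc⟩] with v hcv
  have hcvS : uIcc c v ⊆ S := hS.uIcc_subset hc v.2
  rw [restrict_inter_Ioi_restrict_Iic hc v.2, ← intervalIntegral.integral_of_le hcv,
    intervalIntegral.integral_eq_sub_of_hasDerivAt (fun x hx => hderiv x (hcvS hx))
      (hf.mono_set hcvS).intervalIntegrable]

lemma setIntegral_of_hasDerivAt_of_tendsto [Nonempty S]
    (hderiv : ∀ x ∈ S, HasDerivAt F (f x) x) (hf : IntegrableOn f S) {l m : E}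
    (hbot : Tendsto (fun u : S => F u) atBot (𝓝 m))
    (htop : Tendsto (fun v : S => F v) atTop (𝓝 l)) :
    ∫ x in S, f x = l - m := by
  refine (aecover_coe_Icc hS.measurableSet).integral_eq_of_tendsto _ hf
    (((htop.comp tendsto_snd).sub (hbot.comp tendsto_fst)).congr' ?_)
  obtain ⟨c⟩ := ‹Nonempty S›
  filter_upwards [(eventually_le_atBot c).prod_mk (eventually_ge_atTop c)] with w hw
  have hwS : uIcc (w.1 : ℝ) w.2 ⊆ S := hS.uIcc_subset w.1.2 w.2.2
  rw [Measure.restrict_restrict_of_subset (hS.out w.1.2 w.2.2), integral_Icc_eq_integral_Ioc,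
    ← intervalIntegral.integral_of_le (hw.1.trans hw.2),
    intervalIntegral.integral_eq_sub_of_hasDerivAt (fun x hx => hderiv x (hwS hx))
      (hf.mono_set hwS).intervalIntegrable]
  rfl

end OrdConnected

lemma integrableOn_of_integrableOn_id_mul {S : Set ℝ} (hS : MeasurableSet S) {μ : Measure ℝ}
    {f : ℝ → ℝ} (hf0 : IntegrableAtFilter f (𝓝[S] 0) μ)
    (hf : IntegrableOn (fun x => x * f x) S μ) : IntegrableOn f S μ := by
  obtain ⟨U, hU, hfU⟩ := hf0
  obtain ⟨ε, hε, hεU⟩ := Metric.mem_nhdsWithin_iff.1 hU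
  have hnear : IntegrableOn f (S ∩ Metric.ball 0 ε) μ :=
    hfU.mono_set ((inter_comm _ _).trans_subset hεU)
  have hfar : IntegrableOn f (S \ Metric.ball 0 ε) μ := by
    have hms : MeasurableSet (S \ Metric.ball 0 ε) := hS.diff measurableSet_ball
    have hge : ∀ x ∈ S \ Metric.ball 0 ε, ε ≤ ‖x‖ := fun x hx => by
      simpa only [mem_ball_zero_iff, not_lt] using hx.2
    refine IntegrableOn.congr_fun ((hf.mono_set sdiff_subset).bdd_mul (c := ε⁻¹)
      measurable_inv.aestronglyMeasurable ?_) (fun x hx => ?_) hms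
    · exact ae_restrict_of_forall_mem hms fun x hx => by
        simpa only [norm_inv] using inv_anti₀ hε (hge x hx)
    · exact inv_mul_cancel_left₀ (norm_pos_iff.1 (hε.trans_le (hge x hx))) (f x)
  simpa only [inter_union_sdiff] using hnear.union hfar

lemma integral_Ioi_eq_sub_intervalIntegral {E : Type*} [NormedAddCommGroup E] [NormedSpace ℝ E]
    {μ : Measure ℝ} {f : ℝ → E} (hf : Integrable f μ) (c x : ℝ) :
    ∫ y in Ioi x, f y ∂μ = ∫ y in Ioi c, f y ∂μ - ∫ y in c..x, f y ∂μ := by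
  rw [← intervalIntegral.integral_Ioi_sub_Ioi' hf.integrableOn hf.integrableOn, sub_sub_cancel]

/-- The function `x ↦ exp (-∫₀ˣ y / τ y dy)`. It is the first moment `∫ₓ^∞ y * r y dy` over the
right tail of the density `r` with Stein kernel `τ`, scaled so that this moment is `1` at `0`. -/
noncomputable def steinTail (τ : ℝ → ℝ) (x : ℝ) : ℝ := exp (-∫ y in (0 : ℝ)..x, y / τ y)

/-- The unnormalized density with Stein kernel `τ`. Only its values where `τ` is positive
are meaningful. -/
noncomputable def steinWeight (τ : ℝ → ℝ) (x : ℝ) : ℝ := steinTail τ x / τ x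

/-- The probability density with support `S` and Stein kernel `τ`. -/
noncomputable def steinDensity (S : Set ℝ) (τ : ℝ → ℝ) : ℝ → ℝ :=
  S.indicator fun x => steinWeight τ x / ∫ z in S, steinWeight τ z

section Stein

variable {S : Set ℝ} {τ : ℝ → ℝ} {u v x : ℝ}

lemma steinTail_pos (τ : ℝ → ℝ) (x : ℝ) : 0 < steinTail τ x := exp_pos _

lemma steinTail_zero (τ : ℝ → ℝ) : steinTail τ 0 = 1 := by
  rw [steinTail, intervalIntegral.integral_same, neg_zero, exp_zero]

lemma steinWeight_pos (hτ : 0 < τ x) : 0 < steinWeight τ x := div_pos (steinTail_pos τ x) hτ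

lemma continuousOn_id_div (hτc : ContinuousOn τ S) (hτ : ∀ x ∈ S, 0 < τ x) :
    ContinuousOn (fun y => y / τ y) S :=
  continuousOn_id.div hτc fun x hx => (hτ x hx).ne'

lemma id_mul_steinDensity (S : Set ℝ) (τ : ℝ → ℝ) :
    (fun x => x * steinDensity S τ x) =
      S.indicator fun x => x * steinWeight τ x / ∫ z in S, steinWeight τ z := by
  ext x
  simp only [steinDensity, mul_div_assoc, indicator_mul_right]

lemma hasDerivAt_integral_Ioi_id_mul {q : ℝ → ℝ} (hSo : IsOpen S) (hτc : ContinuousOn τ S)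
    (hτ : ∀ x ∈ S, 0 < τ x) (hq : Integrable fun y => y * q y)
    (hτq : ∀ x ∈ S, ∫ y in Ioi x, y * q y = τ x * q x) (hx : x ∈ S) :
    HasDerivAt (fun x => ∫ y in Ioi x, y * q y) (-(x * q x)) x := by
  have heq := funext fun x => integral_Ioi_eq_sub_intervalIntegral hq 0 x
  have htail : Continuous fun x => ∫ y in Ioi x, y * q y := by
    rw [heq]
    exact continuous_const.sub
      (intervalIntegral.continuous_primitive (fun _ _ => hq.intervalIntegrable) 0)
  have hqc : ContinuousOn q S :=
    (htail.continuousOn.div hτc fun y hy => (hτ y hy).ne').congr fun y hy =>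
      (eq_div_iff (hτ y hy).ne').2 ((mul_comm _ _).trans (hτq y hy).symm)
  have hc : ContinuousOn (fun y => y * q y) S := continuousOn_id.mul hqc
  rw [heq]
  exact (intervalIntegral.integral_hasDerivAt_right hq.intervalIntegrable
    (hc.stronglyMeasurableAtFilter hSo x hx) (hc.continuousAt (hSo.mem_nhds hx))).const_sub _

variable [hS : S.OrdConnected]

lemma intervalIntegrable_id_div (hτc : ContinuousOn τ S) (hτ : ∀ x ∈ S, 0 < τ x)
    (hu : u ∈ S) (hv : v ∈ S) : IntervalIntegrable (fun y => y / τ y) volume u v :=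
  ((continuousOn_id_div hτc hτ).mono (hS.uIcc_subset hu hv)).intervalIntegrable

lemma hasDerivAt_steinTail (hSo : IsOpen S) (h0 : 0 ∈ S) (hτc : ContinuousOn τ S)
    (hτ : ∀ x ∈ S, 0 < τ x) (hx : x ∈ S) :
    HasDerivAt (steinTail τ) (-(x * steinWeight τ x)) x := by
  have hc := continuousOn_id_div hτc hτ
  have hexponent : HasDerivAt (fun x => ∫ y in (0 : ℝ)..x, y / τ y) (x / τ x) x :=
    intervalIntegral.integral_hasDerivAt_right (intervalIntegrable_id_div hτc hτ h0 hx)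
      (hc.stronglyMeasurableAtFilter hSo x hx) (hc.continuousAt (hSo.mem_nhds hx))
  refine hexponent.neg.exp.congr_deriv ?_
  change steinTail τ x * -(x / τ x) = -(x * (steinTail τ x / τ x))
  ring

lemma continuousOn_steinWeight (hSo : IsOpen S) (h0 : 0 ∈ S) (hτc : ContinuousOn τ S)
    (hτ : ∀ x ∈ S, 0 < τ x) : ContinuousOn (steinWeight τ) S :=
  ContinuousOn.div (fun _ hx =>
    (hasDerivAt_steinTail hSo h0 hτc hτ hx).continuousAt.continuousWithinAt) hτc
    fun x hx => (hτ x hx).ne'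

lemma intervalIntegrable_id_mul_steinWeight (hSo : IsOpen S) (h0 : 0 ∈ S)
    (hτc : ContinuousOn τ S) (hτ : ∀ x ∈ S, 0 < τ x) (hu : u ∈ S) (hv : v ∈ S) :
    IntervalIntegrable (fun x => x * steinWeight τ x) volume u v :=
  ((continuousOn_id.mul (continuousOn_steinWeight hSo h0 hτc hτ)).mono
    (hS.uIcc_subset hu hv)).intervalIntegrable

lemma intervalIntegral_id_mul_steinWeight (hSo : IsOpen S) (h0 : 0 ∈ S)
    (hτc : ContinuousOn τ S) (hτ : ∀ x ∈ S, 0 < τ x) (hu : u ∈ S) (hv : v ∈ S) :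
    ∫ x in u..v, x * steinWeight τ x = steinTail τ u - steinTail τ v := by
  rw [← neg_inj, ← intervalIntegral.integral_neg, neg_sub]
  exact intervalIntegral.integral_eq_sub_of_hasDerivAt
    (fun x hx => hasDerivAt_steinTail hSo h0 hτc hτ (hS.uIcc_subset hu hv hx))
    (intervalIntegrable_id_mul_steinWeight hSo h0 hτc hτ hu hv).neg

lemma tendsto_steinTail_atTop (h0 : 0 ∈ S) (hτc : ContinuousOn τ S) (hτ : ∀ x ∈ S, 0 < τ x)
    (hdiv : ∫⁻ y in S ∩ Ioi 0, ENNReal.ofReal (y / τ y) = ⊤) :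
    Tendsto (fun v : S => steinTail τ v) atTop (𝓝 0) :=
  tendsto_exp_neg_atTop_nhds_zero.comp <| tendsto_intervalIntegral_atTop_of_lintegral_eq_top h0
    (fun _ hv => intervalIntegrable_id_div hτc hτ h0 hv)
    (fun x hx => div_nonneg hx.2.out.le (hτ x hx.1).le) hdiv

lemma tendsto_steinTail_atBot (h0 : 0 ∈ S) (hτc : ContinuousOn τ S) (hτ : ∀ x ∈ S, 0 < τ x)
    (hdiv : ∫⁻ y in S ∩ Iio 0, ENNReal.ofReal (-y / τ y) = ⊤) :
    Tendsto (fun u : S => steinTail τ u) atBot (𝓝 0) := by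
  have hlim : Tendsto (fun u : S => ∫ y in u..0, -y / τ y) atBot atTop :=
    tendsto_intervalIntegral_atBot_of_lintegral_eq_top h0
      (fun u hu => by
        simp only [neg_div]
        exact (intervalIntegrable_id_div hτc hτ hu h0).neg)
      (fun x hx => div_nonneg (neg_nonneg.2 hx.2.out.le) (hτ x hx.1).le) hdiv
  refine (tendsto_exp_neg_atTop_nhds_zero.comp hlim).congr fun u => ?_
  simp only [Function.comp_apply, steinTail, neg_div, intervalIntegral.integral_neg,
    intervalIntegral.integral_symm (u : ℝ) 0]

lemma integrableOn_id_mul_steinWeight (hSo : IsOpen S) (h0 : 0 ∈ S)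
    (hτc : ContinuousOn τ S) (hτ : ∀ x ∈ S, 0 < τ x) :
    IntegrableOn (fun x => x * steinWeight τ x) S := by
  have hint {u v : ℝ} (hu : u ∈ S) (hv : v ∈ S) :=
    intervalIntegrable_id_mul_steinWeight hSo h0 hτc hτ hu hv
  refine integrableOn_of_intervalIntegral_norm_le h0 (fun u hu v hv => hint hu hv) 2
    fun u hu v hv hu0 hv0 => ?_
  have hw {x : ℝ} (hx : x ∈ Icc u v) : 0 ≤ steinWeight τ x :=
    (steinWeight_pos (hτ x (hS.out hu hv hx))).le
  have hleft : ∫ x in u..0, ‖x * steinWeight τ x‖ = 1 - steinTail τ u := by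
    have hcongr : EqOn (fun x => ‖x * steinWeight τ x‖) (fun x => -(x * steinWeight τ x))
        (uIcc u 0) := fun x hx => by
      rw [uIcc_of_le hu0] at hx
      exact norm_of_nonpos (mul_nonpos_of_nonpos_of_nonneg hx.2 (hw ⟨hx.1, hx.2.trans hv0⟩))
    rw [intervalIntegral.integral_congr hcongr, intervalIntegral.integral_neg,
      intervalIntegral_id_mul_steinWeight hSo h0 hτc hτ hu h0, steinTail_zero, neg_sub]
  have hright : ∫ x in 0..v, ‖x * steinWeight τ x‖ = 1 - steinTail τ v := by
    have hcongr : EqOn (fun x => ‖x * steinWeight τ x‖) (fun x => x * steinWeight τ x)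
        (uIcc 0 v) := fun x hx => by
      rw [uIcc_of_le hv0] at hx
      exact norm_of_nonneg (mul_nonneg hx.1 (hw ⟨hu0.trans hx.1, hx.2⟩))
    rw [intervalIntegral.integral_congr hcongr,
      intervalIntegral_id_mul_steinWeight hSo h0 hτc hτ h0 hv, steinTail_zero]
  rw [← intervalIntegral.integral_add_adjacent_intervals (hint hu h0).norm (hint h0 hv).norm,
    hleft, hright]
  linarith [steinTail_pos τ u, steinTail_pos τ v]

lemma integrableOn_steinWeight (hSo : IsOpen S) (h0 : 0 ∈ S) (hτc : ContinuousOn τ S)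
    (hτ : ∀ x ∈ S, 0 < τ x) : IntegrableOn (steinWeight τ) S :=
  have hc := continuousOn_steinWeight hSo h0 hτc hτ
  integrableOn_of_integrableOn_id_mul hSo.measurableSet
    (hc.integrableAt_nhdsWithin hSo.measurableSet h0)
    (integrableOn_id_mul_steinWeight hSo h0 hτc hτ)

lemma setIntegral_steinWeight_pos (hSo : IsOpen S) (h0 : 0 ∈ S) (hτc : ContinuousOn τ S)
    (hτ : ∀ x ∈ S, 0 < τ x) : 0 < ∫ x in S, steinWeight τ x := by
  have hpos : ∀ x ∈ S, 0 < steinWeight τ x := fun x hx => steinWeight_pos (hτ x hx)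
  rw [setIntegral_pos_iff_support_of_nonneg_ae
    (ae_restrict_of_forall_mem hSo.measurableSet fun x hx => (hpos x hx).le)
    (integrableOn_steinWeight hSo h0 hτc hτ),
    inter_eq_right.2 (show S ⊆ Function.support (steinWeight τ) from fun x hx => (hpos x hx).ne')]
  exact hSo.measure_pos volume ⟨0, h0⟩

lemma setIntegral_inter_Ioi_id_mul_steinWeight (hSo : IsOpen S) (h0 : 0 ∈ S)
    (hτc : ContinuousOn τ S) (hτ : ∀ x ∈ S, 0 < τ x)
    (hdiv : ∫⁻ y in S ∩ Ioi 0, ENNReal.ofReal (y / τ y) = ⊤) (hx : x ∈ S) :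
    ∫ y in S ∩ Ioi x, y * steinWeight τ y = steinTail τ x := by
  rw [← neg_inj, ← integral_neg, ← zero_sub]
  exact setIntegral_inter_Ioi_of_hasDerivAt_of_tendsto hx
    (fun y hy => hasDerivAt_steinTail hSo h0 hτc hτ hy)
    (integrableOn_id_mul_steinWeight hSo h0 hτc hτ).neg (tendsto_steinTail_atTop h0 hτc hτ hdiv)

lemma setIntegral_id_mul_steinWeight (hSo : IsOpen S) (h0 : 0 ∈ S)
    (hτc : ContinuousOn τ S) (hτ : ∀ x ∈ S, 0 < τ x)
    (hdiv_pos : ∫⁻ y in S ∩ Ioi 0, ENNReal.ofReal (y / τ y) = ⊤)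
    (hdiv_neg : ∫⁻ y in S ∩ Iio 0, ENNReal.ofReal (-y / τ y) = ⊤) :
    ∫ y in S, y * steinWeight τ y = 0 := by
  have : Nonempty S := ⟨⟨0, h0⟩⟩
  rw [← neg_inj, ← integral_neg, neg_zero, ← sub_zero (0 : ℝ)]
  exact setIntegral_of_hasDerivAt_of_tendsto
    (fun y hy => hasDerivAt_steinTail hSo h0 hτc hτ hy)
    (integrableOn_id_mul_steinWeight hSo h0 hτc hτ).neg (tendsto_steinTail_atBot h0 hτc hτ hdiv_neg)
    (tendsto_steinTail_atTop h0 hτc hτ hdiv_pos)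

lemma steinDensity_pos_iff (hSo : IsOpen S) (h0 : 0 ∈ S) (hτc : ContinuousOn τ S)
    (hτ : ∀ x ∈ S, 0 < τ x) : 0 < steinDensity S τ x ↔ x ∈ S := by
  by_cases hx : x ∈ S
  · simp only [steinDensity, indicator_of_mem hx, hx, iff_true]
    exact div_pos (steinWeight_pos (hτ x hx)) (setIntegral_steinWeight_pos hSo h0 hτc hτ)
  · simp only [steinDensity, indicator_of_notMem hx, hx, lt_irrefl]

lemma integral_steinDensity (hSo : IsOpen S) (h0 : 0 ∈ S) (hτc : ContinuousOn τ S)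
    (hτ : ∀ x ∈ S, 0 < τ x) : ∫ x, steinDensity S τ x = 1 := by
  rw [steinDensity, integral_indicator hSo.measurableSet, integral_div,
    div_self (setIntegral_steinWeight_pos hSo h0 hτc hτ).ne']

lemma integrable_id_mul_steinDensity (hSo : IsOpen S) (h0 : 0 ∈ S) (hτc : ContinuousOn τ S)
    (hτ : ∀ x ∈ S, 0 < τ x) : Integrable fun x => x * steinDensity S τ x := by
  rw [id_mul_steinDensity, integrable_indicator_iff hSo.measurableSet]
  exact (integrableOn_id_mul_steinWeight hSo h0 hτc hτ).div_const _

lemma integral_id_mul_steinDensity (hSo : IsOpen S) (h0 : 0 ∈ S)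
    (hτc : ContinuousOn τ S) (hτ : ∀ x ∈ S, 0 < τ x)
    (hdiv_pos : ∫⁻ y in S ∩ Ioi 0, ENNReal.ofReal (y / τ y) = ⊤)
    (hdiv_neg : ∫⁻ y in S ∩ Iio 0, ENNReal.ofReal (-y / τ y) = ⊤) :
    ∫ x, x * steinDensity S τ x = 0 := by
  rw [id_mul_steinDensity, integral_indicator hSo.measurableSet, integral_div,
    setIntegral_id_mul_steinWeight hSo h0 hτc hτ hdiv_pos hdiv_neg, zero_div]

lemma integral_Ioi_id_mul_steinDensity (hSo : IsOpen S) (h0 : 0 ∈ S)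
    (hτc : ContinuousOn τ S) (hτ : ∀ x ∈ S, 0 < τ x)
    (hdiv : ∫⁻ y in S ∩ Ioi 0, ENNReal.ofReal (y / τ y) = ⊤) (hx : x ∈ S) :
    ∫ y in Ioi x, y * steinDensity S τ y = τ x * steinDensity S τ x := by
  rw [id_mul_steinDensity, setIntegral_indicator hSo.measurableSet, inter_comm, integral_div,
    setIntegral_inter_Ioi_id_mul_steinWeight hSo h0 hτc hτ hdiv hx, steinDensity,
    indicator_of_mem hx, ← mul_div_assoc, steinWeight, mul_div_cancel₀ _ (hτ x hx).ne']

lemma exists_eqOn_smul_steinWeight {q : ℝ → ℝ} (hSo : IsOpen S) (h0 : 0 ∈ S)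
    (hτc : ContinuousOn τ S) (hτ : ∀ x ∈ S, 0 < τ x) (hq0 : ∀ x ∈ S, q x ≠ 0)
    (hq : Integrable fun y => y * q y) (hτq : ∀ x ∈ S, ∫ y in Ioi x, y * q y = τ x * q x) :
    ∃ k : ℝ, EqOn q (k • steinWeight τ) S := by
  have hderiv := fun x (hx : x ∈ S) => hasDerivAt_integral_Ioi_id_mul hSo hτc hτ hq hτq hx
  have hderiv' := fun x (hx : x ∈ S) => hasDerivAt_steinTail hSo h0 hτc hτ hx
  have hlog : EqOn (logDeriv fun x => ∫ y in Ioi x, y * q y) (logDeriv (steinTail τ)) S := by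
    intro x hx
    have := (hτ x hx).ne'
    have := hq0 x hx
    have := (steinTail_pos τ x).ne'
    rw [logDeriv_apply, logDeriv_apply, (hderiv x hx).deriv, (hderiv' x hx).deriv, hτq x hx,
      steinWeight]
    field_simp
  obtain ⟨k, -, hk⟩ := (logDeriv_eqOn_iff
    (fun x hx => (hderiv x hx).differentiableAt.differentiableWithinAt)
    (fun x hx => (hderiv' x hx).differentiableAt.differentiableWithinAt)
    hSo hS.isPreconnected (fun x _ => (steinTail_pos τ x).ne')
    (fun x hx => by simpa only [hτq x hx] using mul_ne_zero (hτ x hx).ne' (hq0 x hx))).1 hlog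
  refine ⟨k, fun x hx => ?_⟩
  rw [Pi.smul_apply, smul_eq_mul, steinWeight, ← mul_div_assoc, eq_div_iff (hτ x hx).ne', mul_comm,
    ← hτq x hx]
  exact hk hx

lemma eq_steinDensity {q : ℝ → ℝ} (hSo : IsOpen S) (h0 : 0 ∈ S) (hτc : ContinuousOn τ S)
    (hτ : ∀ x ∈ S, 0 < τ x) (hq0 : Function.support q = S) (hq1 : ∫ x, q x = 1)
    (hq : Integrable fun y => y * q y) (hτq : ∀ x ∈ S, ∫ y in Ioi x, y * q y = τ x * q x) :
    q = steinDensity S τ := by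
  obtain ⟨k, hk⟩ := exists_eqOn_smul_steinWeight hSo h0 hτc hτ (fun x hx => hq0.ge hx) hq hτq
  have hk1 : k * ∫ x in S, steinWeight τ x = 1 := by
    calc k * ∫ x in S, steinWeight τ x = ∫ x in S, q x := by
          rw [← integral_const_mul]
          exact (setIntegral_congr_fun hSo.measurableSet hk).symm
      _ = 1 := by rw [← hq0, setIntegral_support, hq1]
  calc q = S.indicator q := (indicator_eq_self.2 hq0.le).symm
    _ = steinDensity S τ := indicator_congr fun x hx => (hk hx).trans <| by
      rw [Pi.smul_apply, smul_eq_mul, eq_div_iff (right_ne_zero_of_mul_eq_one hk1)]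
      linear_combination steinWeight τ x * hk1

end Stein

lemma isOpen_setOf_lt_coe_lt (a b : EReal) : IsOpen {x : ℝ | a < x ∧ x < b} :=
  isOpen_Ioo.preimage continuous_coe_real_ereal

lemma ordConnected_setOf_lt_coe_lt (a b : EReal) : OrdConnected {x : ℝ | a < x ∧ x < b} :=
  (ordConnected_Ioo (a := a) (b := b)).preimage_mono EReal.coe_strictMono.monotone

lemma setOf_lt_coe_lt_inter_Ioi {a b : EReal} {c : ℝ} (ha : a ≤ c) :
    {x : ℝ | a < x ∧ x < b} ∩ Ioi c = {x : ℝ | c < x ∧ x < b} := by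
  ext x
  exact ⟨fun h => ⟨h.2, h.1.2⟩, fun h => ⟨⟨ha.trans_lt (EReal.coe_lt_coe h.1), h.2⟩, h.1⟩⟩

lemma setOf_lt_coe_lt_inter_Iio {a b : EReal} {c : ℝ} (hb : c ≤ b) :
    {x : ℝ | a < x ∧ x < b} ∩ Iio c = {x : ℝ | a < x ∧ x < c} := by
  ext x
  exact ⟨fun h => ⟨h.1.1, h.2⟩, fun h => ⟨⟨h.1, (EReal.coe_lt_coe h.2).trans_le hb⟩, h.2⟩⟩

theorem stein_density_characterization_general
    (a b : EReal) (ha : a < 0) (hb : 0 < b) (τ : ℝ → ℝ)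
    (hτc : ContinuousOn τ {x : ℝ | a < (x : EReal) ∧ (x : EReal) < b})
    (hτpos : ∀ x : ℝ, a < (x : EReal) → (x : EReal) < b → 0 < τ x)
    (hdiv_pos : ∫⁻ y in {y : ℝ | 0 < y ∧ (y : EReal) < b}, ENNReal.ofReal (y / τ y) = ⊤)
    (hdiv_neg : ∫⁻ y in {y : ℝ | a < (y : EReal) ∧ y < 0}, ENNReal.ofReal (-y / τ y) = ⊤) :
    ∃ p : ℝ → ℝ,
      (∀ x : ℝ, p x =
        if a < (x : EReal) ∧ (x : EReal) < b then
          (Real.exp (-∫ y in (0 : ℝ)..x, y / τ y) / τ x) /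
            (∫ z in {z : ℝ | a < (z : EReal) ∧ (z : EReal) < b},
              Real.exp (-∫ y in (0 : ℝ)..z, y / τ y) / τ z)
        else 0) ∧
      (∀ x : ℝ, 0 < p x ↔ (a < (x : EReal) ∧ (x : EReal) < b)) ∧
      (∫ x, p x) = 1 ∧
      Integrable (fun y => y * p y) volume ∧
      (∫ y, y * p y) = 0 ∧
      (∀ x : ℝ, a < (x : EReal) → (x : EReal) < b →
        τ x = (∫ y in Set.Ioi x, y * p y) / p x) ∧
      (∀ q : ℝ → ℝ, (∀ x, 0 ≤ q x) →
        (∀ x : ℝ, 0 < q x ↔ (a < (x : EReal) ∧ (x : EReal) < b)) →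
        (∫ x, q x) = 1 →
        Integrable (fun y => y * q y) volume →
        (∀ x : ℝ, a < (x : EReal) → (x : EReal) < b →
          τ x = (∫ y in Set.Ioi x, y * q y) / q x) →
        q = p) := by
  set S : Set ℝ := {x : ℝ | a < x ∧ x < b} with hSdef
  have hSo : IsOpen S := isOpen_setOf_lt_coe_lt a b
  have : S.OrdConnected := ordConnected_setOf_lt_coe_lt a b
  have h0 : (0 : ℝ) ∈ S := ⟨ha, hb⟩
  have hτ : ∀ x ∈ S, 0 < τ x := fun x hx => hτpos x hx.1 hx.2
  replace hdiv_pos : ∫⁻ y in S ∩ Ioi 0, ENNReal.ofReal (y / τ y) = ⊤ := by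
    rw [hSdef, setOf_lt_coe_lt_inter_Ioi ha.le]
    exact_mod_cast hdiv_pos
  replace hdiv_neg : ∫⁻ y in S ∩ Iio 0, ENNReal.ofReal (-y / τ y) = ⊤ := by
    rw [hSdef, setOf_lt_coe_lt_inter_Iio hb.le]
    exact_mod_cast hdiv_neg
  have hpos : ∀ x, 0 < steinDensity S τ x ↔ x ∈ S := fun _ => steinDensity_pos_iff hSo h0 hτc hτ
  refine ⟨steinDensity S τ, fun x => ?_, hpos, integral_steinDensity hSo h0 hτc hτ,
    integrable_id_mul_steinDensity hSo h0 hτc hτ,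
    integral_id_mul_steinDensity hSo h0 hτc hτ hdiv_pos hdiv_neg, fun x hax hxb => ?_,
    fun q hq0 hqpos hq1 hqi hτq => ?_⟩
  · classical exact indicator_apply S _ x
  · rw [integral_Ioi_id_mul_steinDensity hSo h0 hτc hτ hdiv_pos ⟨hax, hxb⟩,
      mul_div_cancel_right₀ _ ((hpos x).2 ⟨hax, hxb⟩).ne']
  · have hsupp : Function.support q = S :=
      ext fun x => (hq0 x).lt_iff_ne'.symm.trans (hqpos x)
    exact eq_steinDensity hSo h0 hτc hτ hsupp hq1 hqi fun x hx =>
      ((eq_div_iff ((hqpos x).2 hx).ne').1 (hτq x hx.1 hx.2)).symm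

/-- Stein's characterization of densities by the function `τ`: given `−∞ ≤ a < 0 < b ≤ +∞` and
a continuous nonnegative `τ` with `τ > 0` exactly on `(a,b)`, satisfying
`∫₀^b y/τ(y) dy = +∞` and `∫_a^0 y/τ(y) dy = −∞`, there is a unique (up to null sets)
probability density `p` with support `(a,b)`, zero mean, and
`τ(x) = (∫_x^∞ y p(y) dy)/p(x)` on `(a,b)`; it is given by the explicit formula
`p(x) = C⁻¹ exp(−∫₀^x y/τ(y) dy)/τ(x)` on `(a,b)`. -/
theorem stein_density_characterization
    (a b : EReal) (ha : a < 0) (hb : 0 < b) (τ : ℝ → ℝ)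
    (hτc : Continuous τ) (hτ0 : ∀ x, 0 ≤ τ x)
    (hτpos : ∀ x : ℝ, 0 < τ x ↔ (a < (x : EReal) ∧ (x : EReal) < b))
    (hdiv_pos : ∫⁻ y in {y : ℝ | 0 < y ∧ (y : EReal) < b},
      ENNReal.ofReal (y / τ y) = ⊤)
    (hdiv_neg : ∫⁻ y in {y : ℝ | a < (y : EReal) ∧ y < 0},
      ENNReal.ofReal (-y / τ y) = ⊤) :
    ∃ p : ℝ → ℝ,
      (∀ x : ℝ, p x =
        if a < (x : EReal) ∧ (x : EReal) < b then
          (Real.exp (-∫ y in (0 : ℝ)..x, y / τ y) / τ x) /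
            (∫ z in {z : ℝ | a < (z : EReal) ∧ (z : EReal) < b},
              Real.exp (-∫ y in (0 : ℝ)..z, y / τ y) / τ z)
        else 0) ∧
      (∀ x : ℝ, 0 < p x ↔ (a < (x : EReal) ∧ (x : EReal) < b)) ∧
      (∫ x, p x) = 1 ∧
      Integrable (fun y => y * p y) volume ∧
      (∫ y, y * p y) = 0 ∧
      (∀ x : ℝ, a < (x : EReal) → (x : EReal) < b →
        τ x = (∫ y in Set.Ioi x, y * p y) / p x) ∧
      (∀ q : ℝ → ℝ, Measurable q → (∀ x, 0 ≤ q x) →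
        (∀ x : ℝ, 0 < q x ↔ (a < (x : EReal) ∧ (x : EReal) < b)) →
        (∫ x, q x) = 1 →
        Integrable (fun y => y * q y) volume →
        (∫ y, y * q y) = 0 →
        (∀ x : ℝ, a < (x : EReal) → (x : EReal) < b →
          τ x = (∫ y in Set.Ioi x, y * q y) / q x) →
        q =ᵐ[volume] p) := by
  obtain ⟨p, hp, hpos, hp1, hpi, hp0, hτp, huniq⟩ := stein_density_characterization_general a b
    ha hb τ hτc.continuousOn (fun x hax hxb => (hτpos x).2 ⟨hax, hxb⟩) hdiv_pos hdiv_neg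
  exact ⟨p, hp, hpos, hp1, hpi, hp0, hτp, fun q _ hq0 hqpos hq1 hqi _ hτq =>
    .of_eq (huniq q hq0 hqpos hq1 hqi hτq)⟩
end

section
/- Let Z be a real random variable whose law has density p with respect to Lebesgue measure such that E|Z| < ∞, E[Z] = 0, and there exist −∞ ≤ a < 0 < b ≤ +∞ with p(x) > 0 if, and only if, x ∈ (a,b); define τ(x) = (∫_x^{+∞} y p(y) dy)/p(x) · 1_{(a,b)}(x), and assume ∫₀^b (y/τ(y)) dy = +∞ and ∫_a^0 (y/τ(y)) dy = −∞. Let Y be a real random variable with absolutely continuous distribution such that E[τ(Y) f'(Y) − Y f(Y)] = 0 for every differentiable f : ℝ → ℝ for which x ↦ |τ(x) f'(x)| + |x f(x)| is bounded. Then Y has the same law as Z. -/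
open MeasureTheory Real Set

/-!
Every test function `f` must have `τ f'` bounded while `τ` is only measurable, so `f'` has to be
small wherever `τ` is wild, and continuous derivatives are too rigid for that. Bounded functions
continuous for the density topology are still derivatives everywhere, and by the Lusin–Menchoff
property there is an a.e. positive one, `s`, with `τ s` bounded. Taking `f' = ψ s` for smooth
compactly supported `ψ` with `∫ ψ s = 0`, the du Bois-Reymond lemma weighted by `s` turns Stein's
identity for a density `q` into `τ q = c - ∫₀ˣ u q(u) du` a.e. The density `p` satisfies the same
equation. For a combination `w` of `q` and `p` that kills the constant, `D(x) = -∫₀ˣ u w(u) du`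
equals `τ w`, so `(D²)' = -2 x τ w²` and `D²` is largest at `0`, where it vanishes. Hence `w = 0`.
-/

open Filter Metric Topology

section ZeroDensity

variable {α : Type*} [PseudoMetricSpace α] [MeasurableSpace α] {μ : Measure α} {s t : Set α} {x : α}

/-- `x` is a dispersion point of `s`: the proportion of `closedBall x r` filled by `s` tends to `0`
as `r → 0`. No measurability is required of `s`. -/
def ZeroDensityAt (μ : Measure α) (s : Set α) (x : α) : Prop :=
  Tendsto (fun r ↦ μ (s ∩ closedBall x r) / μ (closedBall x r)) (𝓝[>] 0) (𝓝 0)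

lemma ZeroDensityAt.mono (ht : ZeroDensityAt μ t x) (hst : s ⊆ t) : ZeroDensityAt μ s x :=
  tendsto_of_tendsto_of_tendsto_of_le_of_le tendsto_const_nhds ht (fun _ ↦ zero_le) fun r ↦ by
    dsimp only; gcongr

lemma ZeroDensityAt.union (hs : ZeroDensityAt μ s x) (ht : ZeroDensityAt μ t x) :
    ZeroDensityAt μ (s ∪ t) x := by
  refine tendsto_of_tendsto_of_tendsto_of_le_of_le tendsto_const_nhds
    (by simpa only [add_zero] using hs.add ht) (fun _ ↦ zero_le) fun r ↦ ?_
  dsimp only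
  rw [union_inter_distrib_right, ← ENNReal.add_div]
  gcongr
  exact measure_union_le _ _

lemma zeroDensityAt_of_measure_eq_zero (hs : μ s = 0) (x : α) : ZeroDensityAt μ s x := by
  simp only [ZeroDensityAt, measure_mono_null inter_subset_left hs, ENNReal.zero_div,
    tendsto_const_nhds]

lemma zeroDensityAt_compl_of_isOpen (hs : IsOpen s) (hx : x ∈ s) : ZeroDensityAt μ sᶜ x := by
  obtain ⟨δ, hδ, hball⟩ := isOpen_iff.1 hs x hx
  refine tendsto_const_nhds.congr' ?_
  filter_upwards [Ioo_mem_nhdsGT hδ] with r hr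
  have hdisj : Disjoint sᶜ (closedBall x r) :=
    (subset_compl_iff_disjoint_left.1
      (by simpa only [compl_compl] using (closedBall_subset_ball hr.2).trans hball))
  rw [hdisj.inter_eq, measure_empty, ENNReal.zero_div]

/-- The density topology of `μ`: a set is open when its complement has density zero at each of its
points. It refines the metric topology, so it is kept as a term rather than an instance. -/
abbrev densityTopology (μ : Measure α) : TopologicalSpace α where
  IsOpen s := ∀ x ∈ s, ZeroDensityAt μ sᶜ x
  isOpen_univ x _ := zeroDensityAt_of_measure_eq_zero (by simp only [compl_univ, measure_empty]) x
  isOpen_inter s t hs ht x hx := by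
    simpa only [compl_inter] using (hs x hx.1).union (ht x hx.2)
  isOpen_sUnion S hS x := by
    rintro ⟨s, hs, hxs⟩
    exact (hS s hs x hxs).mono (compl_subset_compl.2 (subset_sUnion_of_mem hs))

lemma densityTopology_le (μ : Measure α) :
    densityTopology μ ≤ (inferInstance : TopologicalSpace α) :=
  fun _ hs _ hx ↦ zeroDensityAt_compl_of_isOpen hs hx

/-- Density-continuous (approximately continuous) functions: continuous for the density topology
on the source. -/
def DensityContinuous {β : Type*} [TopologicalSpace β] (μ : Measure α) (g : α → β) : Prop :=
  Continuous[densityTopology μ, inferInstance] g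

lemma DensityContinuous.mul {f g : α → ℝ} (hf : DensityContinuous μ f)
    (hg : DensityContinuous μ g) : DensityContinuous μ (fun x ↦ f x * g x) :=
  @Continuous.mul ℝ _ _ _ α (densityTopology μ) _ _ hf hg

lemma DensityContinuous.tsum {f : ℕ → α → ℝ} {u : ℕ → ℝ} (hf : ∀ n, DensityContinuous μ (f n))
    (hu : Summable u) (hfu : ∀ n x, ‖f n x‖ ≤ u n) : DensityContinuous μ (fun x ↦ ∑' n, f n x) :=
  @continuous_tsum ℕ α ℝ _ _ u (densityTopology μ) f hf hu hfu

lemma densityContinuous_of_continuous {f : α → ℝ} (hf : Continuous f) : DensityContinuous μ f :=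
  continuous_le_dom (densityTopology_le μ) hf

lemma DensityContinuous.zeroDensityAt_setOf_le_abs_sub {g : α → ℝ} (hg : DensityContinuous μ g)
    (x : α) {ε : ℝ} (hε : 0 < ε) : ZeroDensityAt μ {y | ε ≤ |g y - g x|} x :=
  ((@IsOpen.preimage α ℝ (densityTopology μ) _ _ hg _ (isOpen_ball (x := g x) (ε := ε))) x
    (mem_ball_self hε)).mono fun y (hy : ε ≤ dist (g y) (g x)) ↦ hy.not_gt

end ZeroDensity

section Besicovitch

variable {α : Type*} [MetricSpace α] [SecondCountableTopology α] [MeasurableSpace α]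
  [BorelSpace α] [HasBesicovitchCovering α] {μ : Measure α} [IsLocallyFiniteMeasure μ] {s : Set α}

lemma measure_setOf_not_zeroDensityAt (hs : MeasurableSet s) :
    μ {x | x ∉ s ∧ ¬ ZeroDensityAt μ s x} = 0 := by
  have hae : ∀ᵐ x ∂μ, x ∉ s → ZeroDensityAt μ s x := by
    filter_upwards [Besicovitch.ae_tendsto_measure_inter_div_of_measurableSet μ hs] with x hx hxs
    rwa [indicator_of_notMem hxs] at hx
  simpa only [Classical.not_imp] using ae_iff.1 hae

lemma closure_densityTopology_subset (hs : MeasurableSet s) :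
    closure[densityTopology μ] s ⊆ s ∪ {x | ¬ ZeroDensityAt μ s x} := by
  refine @closure_minimal α (densityTopology μ) _ _ subset_union_left
    (@IsClosed.mk α (densityTopology μ) _ fun x hx ↦ ?_)
  have hx : x ∉ s ∧ ZeroDensityAt μ s x := by simpa using hx
  refine (hx.2.union (zeroDensityAt_of_measure_eq_zero (measure_setOf_not_zeroDensityAt hs) x)).mono
    fun y hy ↦ ?_
  rw [compl_compl] at hy
  grind

lemma measure_closure_densityTopology_diff (hs : MeasurableSet s) :
    μ (closure[densityTopology μ] s \ s) = 0 := by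
  refine measure_mono_null ?_ (measure_setOf_not_zeroDensityAt hs)
  rintro x ⟨hx, hxs⟩
  exact ⟨hxs, (closure_densityTopology_subset hs hx).resolve_left hxs⟩

end Besicovitch

section LusinMenchoff

variable {E : Type*} [NormedAddCommGroup E] [NormedSpace ℝ E] [FiniteDimensional ℝ E]
  [MeasurableSpace E] [BorelSpace E] {μ : Measure E} [μ.IsAddHaarMeasure]

lemma iInter_cthickening_one_div_nat {α : Type*} [PseudoEMetricSpace α] (s : Set α) :
    ⋂ k : ℕ, cthickening (1 / (k + 1)) s = closure s := by
  rw [closure_eq_iInter_cthickening' s (range fun k : ℕ ↦ (1 / (k + 1) : ℝ)) fun ε hε ↦ ?_,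
    biInter_range]
  obtain ⟨k, hk⟩ := exists_nat_one_div_lt hε
  exact ⟨_, mem_range_self k, Nat.one_div_pos_of_nat, hk.le⟩

/- The part of `N` at distance more than `1 / (k + 1)` from `Uᶜ` is covered by an open set so small
that it is negligible in every ball which is centred off `U` and large enough to reach it. -/
lemma exists_isOpen_superset_measure_inter_closedBall_le {N U : Set E} (hN : μ N = 0)
    (hU : IsOpen U) (hNU : N ⊆ U) :
    ∃ O, IsOpen O ∧ N ⊆ O ∧ O ⊆ U ∧
      ∀ x ∉ U, ∀ r, μ (O ∩ closedBall x r) ≤ ENNReal.ofReal r * μ (closedBall x r) := by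
  let ρ (k : ℕ) : ℝ := 1 / (k + 1)
  have hρ (k : ℕ) : 0 < ρ k := Nat.one_div_pos_of_nat
  let W (k : ℕ) : Set E := (cthickening (ρ k) Uᶜ)ᶜ
  have hWU (k : ℕ) : W k ⊆ U := compl_subset_comm.1 (self_subset_cthickening _)
  have hUW : ⋃ k, W k = U := by
    rw [← compl_iInter, iInter_cthickening_one_div_nat, hU.isClosed_compl.closure_eq, compl_compl]
  obtain ⟨δ, hδ, hδsum⟩ := ENNReal.exists_pos_sum_of_countable' one_ne_zero ℕ
  have hcover (k : ℕ) : ∃ O ⊇ N ∩ W k, IsOpen O ∧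
      μ O < δ k * (ENNReal.ofReal (ρ k) * μ (closedBall 0 (ρ k))) := by
    refine exists_isOpen_lt_of_lt _ _ ?_
    rw [measure_mono_null inter_subset_left hN]
    exact ENNReal.mul_pos (hδ k).ne' (mul_ne_zero (ENNReal.ofReal_pos.2 (hρ k)).ne'
      (measure_closedBall_pos μ 0 (hρ k)).ne')
  choose O hNO hO hOμ using hcover
  refine ⟨⋃ k, O k ∩ W k, isOpen_iUnion fun k ↦ (hO k).inter isClosed_cthickening.isOpen_compl,
    fun x hx ↦ ?_, iUnion_subset fun k ↦ inter_subset_right.trans (hWU k), fun x hx r ↦ ?_⟩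
  · obtain ⟨k, hk⟩ := mem_iUnion.1 (hUW.superset (hNU hx))
    exact mem_iUnion.2 ⟨k, hNO k ⟨hx, hk⟩, hk⟩
  have hball (k : ℕ) : μ (O k ∩ W k ∩ closedBall x r) ≤
      δ k * (ENNReal.ofReal r * μ (closedBall x r)) := by
    obtain hempty | ⟨y, ⟨-, hyW⟩, hyr⟩ := (O k ∩ W k ∩ closedBall x r).eq_empty_or_nonempty
    · simp only [hempty, measure_empty, zero_le]
    have hρr : ρ k ≤ r := le_of_not_gt fun hr ↦
      hyW (mem_cthickening_of_dist_le y x _ _ hx ((mem_closedBall.1 hyr).trans hr.le))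
    calc μ (O k ∩ W k ∩ closedBall x r)
        ≤ μ (O k) := measure_mono (inter_subset_left.trans inter_subset_left)
      _ ≤ δ k * (ENNReal.ofReal (ρ k) * μ (closedBall 0 (ρ k))) := (hOμ k).le
      _ ≤ δ k * (ENNReal.ofReal r * μ (closedBall 0 r)) := by gcongr
      _ = _ := by rw [Measure.addHaar_closedBall_center μ x]
  calc μ ((⋃ k, O k ∩ W k) ∩ closedBall x r)
      ≤ ∑' k, μ (O k ∩ W k ∩ closedBall x r) := by
        rw [iUnion_inter]; exact measure_iUnion_le _
    _ ≤ (∑' k, δ k) * (ENNReal.ofReal r * μ (closedBall x r)) := by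
        rw [← ENNReal.tsum_mul_right]; exact ENNReal.tsum_le_tsum hball
    _ ≤ ENNReal.ofReal r * μ (closedBall x r) := mul_le_of_le_one_left' hδsum.le

lemma exists_isOpen_superset_zeroDensityAt {N U : Set E} (hN : μ N = 0) (hU : IsOpen U)
    (hNU : N ⊆ U) : ∃ O, IsOpen O ∧ N ⊆ O ∧ O ⊆ U ∧ ∀ x ∉ U, ZeroDensityAt μ O x := by
  obtain ⟨O, hO, hNO, hOU, hball⟩ :=
    exists_isOpen_superset_measure_inter_closedBall_le hN hU hNU
  refine ⟨O, hO, hNO, hOU, fun x hx ↦ tendsto_of_tendsto_of_tendsto_of_le_of_le tendsto_const_nhds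
    ?_ (fun _ ↦ zero_le) fun r ↦ ENNReal.div_le_of_le_mul (hball x hx r)⟩
  simpa only [ENNReal.ofReal_zero] using
    (ENNReal.continuous_ofReal.tendsto 0).mono_left nhdsWithin_le_nhds

/-- The pairs `(C, U)` between which the Urysohn construction interpolates for the density topology:
both sets are tied to metrically open ones, which makes them Borel. -/
def DensitySeparated (μ : Measure E) (C U : Set E) : Prop :=
  IsOpen U ∧ ∃ V, IsOpen V ∧ C = closure[densityTopology μ] V

lemma DensitySeparated.exists_between {C U : Set E} (h : DensitySeparated μ C U) (hCU : C ⊆ U) :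
    ∃ V, IsOpen[densityTopology μ] V ∧ C ⊆ V ∧ closure[densityTopology μ] V ⊆ U ∧
      DensitySeparated μ C V ∧ DensitySeparated μ (closure[densityTopology μ] V) U := by
  obtain ⟨hU, V, hV, rfl⟩ := h
  have subset_closure_V : V ⊆ closure[densityTopology μ] V :=
    @subset_closure E (densityTopology μ) V
  obtain ⟨O, hO, hVO, hOU, hO₀⟩ := exists_isOpen_superset_zeroDensityAt
    (measure_closure_densityTopology_diff (μ := μ) hV.measurableSet) hU (sdiff_subset.trans hCU)
  have hV₀ (x) (hx : x ∉ U) : ZeroDensityAt μ V x :=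
    ((@isClosed_closure E (densityTopology μ) V).isOpen_compl x fun h ↦ hx (hCU h)).mono
      (by rwa [compl_compl])
  have hVO_open := hV.union hO
  refine ⟨V ∪ O, densityTopology_le μ _ hVO_open, ?_, fun x hx ↦ ?_, ⟨hVO_open, V, hV, rfl⟩,
    ⟨hU, V ∪ O, hVO_open, rfl⟩⟩
  · exact sdiff_subset_iff.1 hVO
  · by_contra hxU
    exact (closure_densityTopology_subset hVO_open.measurableSet hx).elim
      (fun h ↦ hxU (union_subset (subset_closure_V.trans hCU) hOU h))
      fun h ↦ h ((hV₀ x hxU).union (hO₀ x hxU))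

end LusinMenchoff

section Urysohn

variable {X : Type*} [TopologicalSpace X] [MeasurableSpace X] {P : Set X → Set X → Prop}

lemma measurable_urysohns_approx (hP : ∀ {C U}, P C U → MeasurableSet U) (c : Urysohns.CU P)
    (n : ℕ) : Measurable (c.approx n) := by
  induction n generalizing c with
  | zero => exact measurable_one.indicator (hP c.P_C_U).compl
  | succ n ih =>
    simp only [Urysohns.CU.approx, midpoint_eq_smul_add]
    exact ((ih c.left).add (ih c.right)).const_smul (⅟ 2 : ℝ)

lemma exists_continuous_measurable_urysohn (hP : ∀ {C U}, P C U → MeasurableSet U)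
    (hsplit : ∀ {C U}, IsClosed C → P C U → IsOpen U → C ⊆ U →
      ∃ V, IsOpen V ∧ C ⊆ V ∧ closure V ⊆ U ∧ P C V ∧ P (closure V) U)
    {C U : Set X} (hC : IsClosed C) (hU : IsOpen U) (hCU : C ⊆ U) (h : P C U) :
    ∃ g : X → ℝ, Continuous g ∧ Measurable g ∧ (∀ x, g x ∈ Icc 0 1) ∧ EqOn g 0 C ∧ EqOn g 1 Uᶜ :=
  let c : Urysohns.CU P := ⟨C, U, h, hC, hU, hCU, hsplit⟩
  ⟨c.lim, c.continuous_lim,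
    measurable_of_tendsto_metrizable (measurable_urysohns_approx hP c)
      (tendsto_pi_nhds.2 c.tendsto_approx_atTop),
    c.lim_mem_Icc, c.lim_of_mem_C, c.lim_of_notMem_U⟩

end Urysohn

section Weight

lemma measurable_tsum_of_summable {α : Type*} [MeasurableSpace α] {f : ℕ → α → ℝ}
    (hf : ∀ n, Measurable (f n)) (hsum : ∀ x, Summable (f · x)) :
    Measurable fun x ↦ ∑' n, f n x :=
  measurable_of_tendsto_metrizable
    (fun N ↦ Finset.measurable_fun_sum (Finset.range N) fun n _ ↦ hf n)
    (tendsto_pi_nhds.2 fun x ↦ (hsum x).hasSum.tendsto_sum_nat)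

variable {E : Type*} [NormedAddCommGroup E] [NormedSpace ℝ E] [FiniteDimensional ℝ E]
  [MeasurableSpace E] [BorelSpace E] {μ : Measure E} [μ.IsAddHaarMeasure]

lemma exists_densityContinuous_measure_ne_one_lt {A : Set E} (hA : MeasurableSet A)
    (hμA : μ A ≠ ⊤) {ε : ENNReal} (hε : ε ≠ 0) :
    ∃ g : E → ℝ, Measurable g ∧ DensityContinuous μ g ∧ (∀ x, g x ∈ Icc 0 1) ∧
      (∀ x ∉ A, g x = 0) ∧ μ {x ∈ A | g x ≠ 1} < ε := by
  obtain ⟨K, hKA, hK, hAK⟩ := hA.exists_isClosed_sdiff_lt hμA (ENNReal.half_pos hε).ne'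
  obtain ⟨O, hKO, hO, hμO⟩ := exists_isOpen_lt_of_lt _ (ε / 2)
    ((measure_closure_densityTopology_diff (μ := μ) hK.measurableSet.compl).trans_lt
      (ENNReal.half_pos hε))
  have hU : IsOpen (Kᶜ ∪ O) := hK.isOpen_compl.union hO
  obtain ⟨g, hgc, hgm, hg, hg₀, hg₁⟩ := @exists_continuous_measurable_urysohn E (densityTopology μ)
    _ (DensitySeparated μ) (fun h ↦ h.1.measurableSet) (fun _ h _ ↦ h.exists_between) _ _
    (@isClosed_closure E (densityTopology μ) Kᶜ) (densityTopology_le μ _ hU)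
    (sdiff_subset_iff.1 hKO) ⟨hU, Kᶜ, hK.isOpen_compl, rfl⟩
  refine ⟨g, hgm, hgc, hg, fun x hx ↦ hg₀ (@subset_closure E (densityTopology μ) Kᶜ x
    fun hxK ↦ hx (hKA hxK)), ?_⟩
  have hsub : {x ∈ A | g x ≠ 1} ⊆ (A \ K) ∪ O := by
    rintro x ⟨hxA, hgx⟩
    by_contra hx
    exact hgx (hg₁ (by simp_all))
  calc μ {x ∈ A | g x ≠ 1} ≤ μ (A \ K) + μ O := (measure_mono hsub).trans (measure_union_le _ _)
    _ < ε / 2 + ε / 2 := ENNReal.add_lt_add hAK hμO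
    _ = ε := ENNReal.add_halves ε

lemma exists_densityContinuous_seq_eventually_eq_one {A : ℕ → Set E}
    (hA : ∀ n, MeasurableSet (A n)) (hμA : ∀ n, μ (A n) ≠ ⊤)
    (hcover : ∀ x, ∀ᶠ n in atTop, x ∈ A n) :
    ∃ g : ℕ → E → ℝ, (∀ n, Measurable (g n)) ∧ (∀ n, DensityContinuous μ (g n)) ∧
      (∀ n x, g n x ∈ Icc 0 1) ∧ (∀ n, ∀ x ∉ A n, g n x = 0) ∧
      ∀ᵐ x ∂μ, ∀ᶠ n in atTop, g n x = 1 := by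
  obtain ⟨ε, hε, hεsum⟩ := ENNReal.exists_pos_sum_of_countable' one_ne_zero ℕ
  choose g hgm hgc hg hgA hgε using fun n ↦
    exists_densityContinuous_measure_ne_one_lt (hA n) (hμA n) (hε n).ne'
  refine ⟨g, hgm, hgc, hg, hgA, ?_⟩
  filter_upwards [ae_eventually_notMem
    (((ENNReal.tsum_le_tsum fun n ↦ (hgε n).le).trans_lt hεsum).trans ENNReal.one_lt_top).ne]
    with x hx
  filter_upwards [hx, hcover x] with n hn hxA
  exact not_not.1 fun h ↦ hn ⟨hxA, h⟩

lemma exists_densityContinuous_weight {w : E → ℝ} (hw : Measurable w) (hw_one : ∀ x, 1 ≤ w x) :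
    ∃ s : E → ℝ, Measurable s ∧ DensityContinuous μ s ∧ (∀ x, 0 ≤ s x) ∧ (∀ x, w x * s x ≤ 1) ∧
      ∀ᵐ x ∂μ, 0 < s x := by
  let A (n : ℕ) : Set E := {x | w x ≤ n + 1} ∩ closedBall 0 n
  obtain ⟨g, hgm, hgc, hg, hgA, hg_one⟩ := exists_densityContinuous_seq_eventually_eq_one (μ := μ)
    (A := A) (fun n ↦ (measurableSet_le hw measurable_const).inter measurableSet_closedBall)
    (fun n ↦ measure_ne_top_of_subset inter_subset_right measure_closedBall_lt_top.ne)
    fun x ↦ ((tendsto_natCast_atTop_atTop.eventually_ge_atTop (w x)).mono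
      fun n hn ↦ hn.trans (lt_add_one _).le).and
        ((tendsto_natCast_atTop_atTop.eventually_ge_atTop ‖x‖).mono
          fun n hn ↦ mem_closedBall_zero_iff.2 hn)
  let term (n : ℕ) (x : E) : ℝ := 1 / 2 / 2 ^ n / (n + 1) * g n x
  have hterm_nonneg (n x) : 0 ≤ term n x := mul_nonneg (by positivity) (hg n x).1
  have hterm_weighted (n x) : w x * term n x ≤ 1 / 2 / 2 ^ n := by
    by_cases hx : x ∈ A n
    · calc w x * term n x ≤ (n + 1) * (1 / 2 / 2 ^ n / (n + 1) * 1) :=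
            mul_le_mul hx.1 (mul_le_mul_of_nonneg_left (hg n x).2 (by positivity))
              (hterm_nonneg n x) (by positivity)
        _ = 1 / 2 / 2 ^ n := by field_simp
    · simp only [term, hgA n x hx, mul_zero]; positivity
  have hterm_le (n x) : ‖term n x‖ ≤ 1 / 2 / 2 ^ n := by
    rw [Real.norm_of_nonneg (hterm_nonneg n x)]
    exact (le_mul_of_one_le_left (hterm_nonneg n x) (hw_one x)).trans (hterm_weighted n x)
  have hsummable (x) : Summable (term · x) :=
    .of_norm_bounded (summable_geometric_two' 1) (hterm_le · x)
  refine ⟨fun x ↦ ∑' n, term n x, measurable_tsum_of_summable (fun n ↦ (hgm n).const_mul _)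
    hsummable, .tsum (fun n ↦ (densityContinuous_of_continuous continuous_const).mul (hgc n))
      (summable_geometric_two' 1) hterm_le, fun x ↦ tsum_nonneg (hterm_nonneg · x), fun x ↦ ?_, ?_⟩
  · rw [← tsum_mul_left]
    exact (((hsummable x).mul_left _).tsum_le_tsum (hterm_weighted · x)
      (summable_geometric_two' 1)).trans_eq (tsum_geometric_two' 1)
  · filter_upwards [hg_one] with x hx
    obtain ⟨n, hn⟩ := hx.exists
    exact (hsummable x).tsum_pos (hterm_nonneg · x) n (by simp only [term, hn]; positivity)

end Weight

section LocallyIntegrable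

lemma intervalIntegrable_of_locallyIntegrable {r : ℝ → ℝ} (hr : LocallyIntegrable r) (a b : ℝ) :
    IntervalIntegrable r volume a b :=
  (hr.integrableOn_isCompact isCompact_uIcc).intervalIntegrable

variable {E : Type*} [TopologicalSpace E] [MeasurableSpace E] {μ : Measure E} {g : E → ℝ}

lemma locallyIntegrable_of_abs_le [IsLocallyFiniteMeasure μ] {M : ℝ} (hg : Measurable g)
    (hM : ∀ x, |g x| ≤ M) : LocallyIntegrable g μ :=
  (locallyIntegrable_const M).mono hg.aestronglyMeasurable
    (.of_forall fun y ↦ (hM y).trans (le_abs_self M))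

lemma integrable_of_hasCompactSupport_of_locallyIntegrable (hg : LocallyIntegrable g μ)
    (hgc : HasCompactSupport g) : Integrable g μ :=
  (integrableOn_iff_integrable_of_support_subset (subset_tsupport g)).1
    (hg.integrableOn_isCompact hgc)

end LocallyIntegrable

section PrimitiveOfDensityContinuous

lemma setAverage_le_add_mul_measureReal_div {α : Type*} [MeasurableSpace α] {μ : Measure α}
    {f : α → ℝ} {ε M : ℝ} (hf : Measurable f) (hf_nonneg : ∀ y, 0 ≤ f y) (hfM : ∀ y, f y ≤ M)
    (hε : 0 ≤ ε) (s : Set α) :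
    ⨍ y in s, f y ∂μ ≤ ε + M * (μ.real ({y | ε ≤ f y} ∩ s) / μ.real s) := by
  obtain hs | hs := eq_or_ne (μ.real s) 0
  · simpa only [setAverage_eq, hs, inv_zero, zero_smul, div_zero, mul_zero, add_zero]
  have hμs : μ s ≠ ⊤ := fun h ↦ hs (by rw [measureReal_def, h, ENNReal.toReal_top])
  have hD : MeasurableSet {y | ε ≤ f y} := measurableSet_le measurable_const hf
  have hpointwise (y) : f y ≤ ε + {y | ε ≤ f y}.indicator (fun _ ↦ M) y := by
    by_cases hy : ε ≤ f y
    · rw [indicator_of_mem (by exact hy)]; linarith [hfM y]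
    · rw [indicator_of_notMem (by exact hy)]; linarith
  have hint : IntegrableOn ({y | ε ≤ f y}.indicator fun _ ↦ M) s μ :=
    (integrableOn_const hμs).indicator hD
  have hconst : IntegrableOn (fun _ ↦ ε) s μ := integrableOn_const hμs
  have hle : ∫ y in s, f y ∂μ ≤ ε * μ.real s + M * μ.real ({y | ε ≤ f y} ∩ s) := by
    calc ∫ y in s, f y ∂μ
        ≤ ∫ y in s, (ε + {y | ε ≤ f y}.indicator (fun _ ↦ M) y) ∂μ :=
          integral_mono_of_nonneg (.of_forall hf_nonneg) (hconst.add hint)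
            (.of_forall hpointwise)
      _ = ε * μ.real s + M * μ.real ({y | ε ≤ f y} ∩ s) := by
          rw [integral_add hconst.integrable hint.integrable, setIntegral_const,
            integral_indicator_const _ hD, measureReal_restrict_apply hD, smul_eq_mul, smul_eq_mul,
            mul_comm ε, mul_comm M]
  rw [setAverage_eq, smul_eq_mul, inv_mul_le_iff₀ (measureReal_nonneg.lt_of_ne' hs)]
  calc _ ≤ _ := hle
    _ = _ := by field_simp

lemma tendsto_average_of_zeroDensityAt {α : Type*} [PseudoMetricSpace α] [MeasurableSpace α]
    {μ : Measure α} {f : α → ℝ} {M : ℝ} {x : α} (hf : Measurable f)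
    (hf_nonneg : ∀ y, 0 ≤ f y) (hfM : ∀ y, f y ≤ M)
    (hfx : ∀ ε > 0, ZeroDensityAt μ {y | ε ≤ f y} x) :
    Tendsto (fun r ↦ ⨍ y in closedBall x r, f y ∂μ) (𝓝[>] 0) (𝓝 0) := by
  refine (nhds_basis_Ioo_pos 0).tendsto_right_iff.2 fun ε hε ↦ ?_
  have hratio : Tendsto (fun r ↦ ε / 2 + M * (μ.real ({y | ε / 2 ≤ f y} ∩ closedBall x r) /
      μ.real (closedBall x r))) (𝓝[>] 0) (𝓝 (ε / 2)) := by
    simpa only [measureReal_def, Function.comp_def, ENNReal.toReal_div, ENNReal.toReal_zero,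
      mul_zero, add_zero] using
      (((ENNReal.tendsto_toReal ENNReal.zero_ne_top).comp
        (hfx (ε / 2) (half_pos hε))).const_mul M).const_add (ε / 2)
  filter_upwards [hratio.eventually_lt_const (half_lt_self hε)] with r hr
  have hle := setAverage_le_add_mul_measureReal_div (μ := μ) hf hf_nonneg hfM (half_pos hε).le
    (closedBall x r)
  have hnonneg : 0 ≤ ⨍ y in closedBall x r, f y ∂μ := integral_nonneg hf_nonneg
  exact ⟨by linarith, by linarith⟩

lemma hasDerivAt_integral_of_tendsto_average {g : ℝ → ℝ} {x : ℝ} (hg : LocallyIntegrable g)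
    (hx : Tendsto (fun r ↦ ⨍ y in closedBall x r, |g y - g x|) (𝓝[>] 0) (𝓝 0)) :
    HasDerivAt (fun y ↦ ∫ t in (0 : ℝ)..y, g t) (g x) x := by
  have hint := intervalIntegrable_of_locallyIntegrable hg
  rw [hasDerivAt_iff_isLittleO_nhds_zero, Asymptotics.isLittleO_iff]
  intro ε hε
  have hsmall := (tendsto_norm_nhdsNE_zero (E := ℝ)).eventually
    (hx.eventually_le_const (half_pos hε))
  filter_upwards [eventually_nhdsWithin_iff.1 hsmall] with k hk
  obtain rfl | hk₀ := eq_or_ne k 0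
  · simp
  have hsub : uIoc x (x + k) ⊆ closedBall x ‖k‖ := fun y hy ↦ by
    simpa only [mem_closedBall, Real.dist_eq, Real.norm_eq_abs, add_sub_cancel_left] using
      abs_sub_left_of_mem_uIcc (uIoc_subset_uIcc hy)
  have hball : IntegrableOn (fun t ↦ |g t - g x|) (closedBall x ‖k‖) :=
    ((hg.integrableOn_isCompact (isCompact_closedBall x ‖k‖)).sub
      (integrableOn_const measure_closedBall_lt_top.ne)).abs
  calc ‖(∫ t in 0..(x + k), g t) - (∫ t in 0..x, g t) - k • g x‖
      = ‖∫ t in x..(x + k), (g t - g x)‖ := by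
        rw [intervalIntegral.integral_interval_sub_left (hint _ _) (hint _ _),
          intervalIntegral.integral_sub (hint _ _) intervalIntegrable_const,
          intervalIntegral.integral_const, add_sub_cancel_left]
    _ ≤ ∫ t in uIoc x (x + k), |g t - g x| := intervalIntegral.norm_integral_le_integral_norm_uIoc
    _ ≤ ∫ t in closedBall x ‖k‖, |g t - g x| :=
        setIntegral_mono_set hball (.of_forall fun _ ↦ abs_nonneg _) hsub.eventuallyLE
    _ = 2 * ‖k‖ * ⨍ t in closedBall x ‖k‖, |g t - g x| := by
        rw [setAverage_eq, Real.volume_real_closedBall (norm_nonneg k), smul_eq_mul,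
          mul_inv_cancel_left₀ (by simpa using hk₀)]
    _ ≤ 2 * ‖k‖ * (ε / 2) := by gcongr; exact hk hk₀
    _ = ε * ‖k‖ := by ring

lemma DensityContinuous.hasDerivAt_integral {g : ℝ → ℝ} {M : ℝ} (hg : DensityContinuous volume g)
    (hgm : Measurable g) (hM : ∀ x, |g x| ≤ M) (x : ℝ) :
    HasDerivAt (fun y ↦ ∫ t in (0 : ℝ)..y, g t) (g x) x :=
  hasDerivAt_integral_of_tendsto_average (locallyIntegrable_of_abs_le hgm hM) <|
    tendsto_average_of_zeroDensityAt (hgm.sub_const (g x)).abs (fun _ ↦ abs_nonneg _)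
      (fun y ↦ (abs_sub _ _).trans (add_le_add (hM y) (hM x)))
      fun _ hε ↦ hg.zeroDensityAt_setOf_le_abs_sub x hε

end PrimitiveOfDensityContinuous

section DuBoisReymond

lemma exists_ae_eq_mul_of_forall_contDiff_integral_mul_eq_zero {E : Type*} [NormedAddCommGroup E]
    [NormedSpace ℝ E] [FiniteDimensional ℝ E] [MeasurableSpace E] [BorelSpace E] {μ : Measure E}
    {f s : E → ℝ} (hf : LocallyIntegrable f μ) (hs : LocallyIntegrable s μ)
    (h : ∀ ψ : E → ℝ, ContDiff ℝ (⊤ : ℕ∞) ψ → HasCompactSupport ψ →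
      ∫ x, ψ x * s x ∂μ = 0 → ∫ x, ψ x * f x ∂μ = 0) :
    ∃ c : ℝ, ∀ᵐ x ∂μ, f x = c * s x := by
  by_cases hzero : ∀ ψ : E → ℝ, ContDiff ℝ (⊤ : ℕ∞) ψ → HasCompactSupport ψ →
      ∫ x, ψ x * s x ∂μ = 0
  · refine ⟨0, ?_⟩
    simpa only [zero_mul] using ae_eq_zero_of_integral_contDiff_smul_eq_zero hf
      fun ψ hψ hψc ↦ h ψ hψ hψc (hzero ψ hψ hψc)
  push Not at hzero
  obtain ⟨ψ₀, hψ₀, hψ₀c, hne⟩ := hzero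
  have hint {u ψ : E → ℝ} (hu : LocallyIntegrable u μ) (hψ : ContDiff ℝ (⊤ : ℕ∞) ψ)
      (hψc : HasCompactSupport ψ) : Integrable (fun x ↦ ψ x * u x) μ :=
    hu.integrable_smul_left_of_hasCompactSupport hψ.continuous hψc
  set c := (∫ x, ψ₀ x * f x ∂μ) / ∫ x, ψ₀ x * s x ∂μ with hc
  refine ⟨c, ?_⟩
  have hdiff := ae_eq_zero_of_integral_contDiff_smul_eq_zero (hf.sub (hs.smul c)) fun ψ hψ hψc ↦ by
    set d := (∫ x, ψ x * s x ∂μ) / ∫ x, ψ₀ x * s x ∂μ with hd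
    have hsplit {u : E → ℝ} (hu : LocallyIntegrable u μ) :
        ∫ x, (ψ x - d * ψ₀ x) * u x ∂μ = (∫ x, ψ x * u x ∂μ) - d * ∫ x, ψ₀ x * u x ∂μ := by
      simp only [sub_mul, mul_assoc]
      rw [integral_sub (hint hu hψ hψc) ((hint hu hψ₀ hψ₀c).const_mul d), integral_const_mul]
    have hf_eq := h (fun x ↦ ψ x - d * ψ₀ x) (hψ.sub (contDiff_const.mul hψ₀))
      (hψc.sub hψ₀c.mul_left) (by rw [hsplit hs, hd, div_mul_cancel₀ _ hne, sub_self])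
    rw [hsplit hf, hd] at hf_eq
    simp only [Pi.sub_apply, Pi.smul_apply, smul_eq_mul, mul_sub, mul_left_comm _ c]
    rw [integral_sub (hint hf hψ hψc) ((hint hs hψ hψc).const_mul c), integral_const_mul, hc]
    linear_combination hf_eq
  filter_upwards [hdiff] with x hx
  simpa only [Pi.sub_apply, Pi.smul_apply, smul_eq_mul, sub_eq_zero] using hx

end DuBoisReymond

section Primitive

variable {g r : ℝ → ℝ} {a b : ℝ}

lemma integral_primitive_mul_add_integral_mul_primitive (hg : IntervalIntegrable g volume a b)
    (hr : IntervalIntegrable r volume a b) :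
    (∫ x in a..b, (∫ t in a..x, g t) * r x) + ∫ x in a..b, g x * ∫ t in a..x, r t =
      (∫ x in a..b, g x) * ∫ x in a..b, r x := by
  have hderiv {u : ℝ → ℝ} (hu : IntervalIntegrable u volume a b) :
      ∀ᵐ x, x ∈ uIoc a b → deriv (fun y ↦ ∫ t in a..y, u t) x = u x := by
    filter_upwards [hu.ae_hasDerivAt_integral] with x hx hxab
    exact (hx (uIoc_subset_uIcc hxab) a left_mem_uIcc).deriv
  have hparts := (hg.absolutelyContinuousOnInterval_intervalIntegral
    left_mem_uIcc).integral_mul_deriv_eq_deriv_mul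
      (hr.absolutelyContinuousOnInterval_intervalIntegral left_mem_uIcc)
  have hleft : ∫ x in a..b, (∫ t in a..x, g t) * deriv (fun y ↦ ∫ t in a..y, r t) x =
      ∫ x in a..b, (∫ t in a..x, g t) * r x :=
    intervalIntegral.integral_congr_ae ((hderiv hr).mono fun x hx hxab ↦ by rw [hx hxab])
  have hright : ∫ x in a..b, deriv (fun y ↦ ∫ t in a..y, g t) x * ∫ t in a..x, r t =
      ∫ x in a..b, g x * ∫ t in a..x, r t :=
    intervalIntegral.integral_congr_ae ((hderiv hg).mono fun x hx hxab ↦ by rw [hx hxab])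
  rw [hleft, hright, intervalIntegral.integral_same, zero_mul, sub_zero] at hparts
  linarith

lemma support_primitive_subset (hsupp : Function.support g ⊆ Ioc a b) (hg : ∫ x, g x = 0) :
    Function.support (fun x ↦ ∫ t in a..x, g t) ⊆ Ioc a b := by
  refine Function.support_subset_iff'.2 fun x hmem ↦ ?_
  rcases le_or_gt x a with hxa | hax
  · rw [intervalIntegral.integral_of_ge hxa, setIntegral_eq_zero_of_forall_eq_zero, neg_zero]
    exact fun t ht ↦ Function.notMem_support.1 fun h ↦ ht.2.not_gt (hsupp h).1
  · have hbx : b ≤ x := le_of_not_ge fun h ↦ hmem ⟨hax, h⟩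
    exact (intervalIntegral.integral_eq_integral_of_support_subset
      (hsupp.trans (Ioc_subset_Ioc_right hbx))).trans hg

lemma integral_primitive_mul_eq_neg (hg : Integrable g) (hr : LocallyIntegrable r)
    (hsupp : Function.support g ⊆ Ioc a b) (hg_zero : ∫ x, g x = 0) (c : ℝ) :
    ∫ x, (∫ t in a..x, g t) * r x = -∫ x, g x * ∫ t in c..x, r t := by
  have hr_int := intervalIntegrable_of_locallyIntegrable hr
  have hprim : Continuous fun x ↦ ∫ t in a..x, r t := intervalIntegral.continuous_primitive hr_int a
  have hgR : IntervalIntegrable (fun x ↦ g x * ∫ t in a..x, r t) volume a b :=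
    hg.intervalIntegrable.mul_continuousOn hprim.continuousOn
  have hab_zero : ∫ x in a..b, g x = 0 := by
    rw [intervalIntegral.integral_eq_integral_of_support_subset hsupp, hg_zero]
  have hbase : (fun x ↦ g x * ∫ t in c..x, r t) =
      fun x ↦ g x * (∫ t in a..x, r t) + g x * ∫ t in c..a, r t := by
    funext x
    rw [← mul_add, add_comm,
      intervalIntegral.integral_add_adjacent_intervals (hr_int c a) (hr_int a x)]
  have hparts := integral_primitive_mul_add_integral_mul_primitive
    hg.intervalIntegrable (hr_int a b)
  rw [hab_zero, zero_mul, intervalIntegral.integral_eq_integral_of_support_subset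
    ((Function.support_mul_subset_left _ _).trans (support_primitive_subset hsupp hg_zero))]
    at hparts
  rw [← intervalIntegral.integral_eq_integral_of_support_subset
    (f := fun x ↦ g x * ∫ t in c..x, r t) ((Function.support_mul_subset_left _ _).trans hsupp)]
  rw [hbase, intervalIntegral.integral_add hgR (hg.intervalIntegrable.mul_const _),
    intervalIntegral.integral_mul_const, hab_zero]
  linarith

lemma integral_eq_zero_of_mul_primitive_mul_nonpos (hr : LocallyIntegrable r)
    (h : ∀ᵐ x, x * ((∫ t in (0 : ℝ)..x, r t) * r x) ≤ 0) (T : ℝ) : ∫ t in (0 : ℝ)..T, r t = 0 := by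
  have hr_int := intervalIntegrable_of_locallyIntegrable hr
  have hsq := integral_primitive_mul_add_integral_mul_primitive (hr_int 0 T) (hr_int 0 T)
  simp only [mul_comm (r _)] at hsq
  have hnonpos : ∫ x in (0 : ℝ)..T, (∫ t in (0 : ℝ)..x, r t) * r x ≤ 0 := by
    rcases le_total 0 T with hT | hT
    · rw [intervalIntegral.integral_of_le hT]
      refine setIntegral_nonpos_ae measurableSet_Ioc ?_
      filter_upwards [h] with x hx hxT
      exact nonpos_of_mul_nonpos_right hx hxT.1
    · rw [intervalIntegral.integral_of_ge hT]
      refine neg_nonpos.2 (setIntegral_nonneg_of_ae_restrict ?_)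
      filter_upwards [ae_restrict_of_ae h, ae_restrict_of_ae (volume.ae_ne 0),
        ae_restrict_mem measurableSet_Ioc] with x hx hx₀ hxT
      exact nonneg_of_mul_nonpos_right hx (lt_of_le_of_ne hxT.2 hx₀)
  nlinarith [sq_nonneg (∫ t in (0 : ℝ)..T, r t)]

lemma ae_eq_zero_of_primitive_eq_zero (hr : LocallyIntegrable r)
    (h : ∀ T, ∫ t in (0 : ℝ)..T, r t = 0) : r =ᵐ[volume] 0 := by
  filter_upwards [LocallyIntegrable.ae_hasDerivAt_integral hr] with x hx
  have hderiv := hx 0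
  simp only [h] at hderiv
  exact hderiv.unique (hasDerivAt_const x 0)

lemma ae_eq_zero_of_mul_eq_neg_primitive {τ w : ℝ → ℝ} (hτ : ∀ x, 0 ≤ τ x)
    (hw : LocallyIntegrable fun u ↦ u * w u)
    (h : ∀ᵐ x, τ x * w x = -∫ u in (0 : ℝ)..x, u * w u) : w =ᵐ[volume] 0 := by
  have hprim := integral_eq_zero_of_mul_primitive_mul_nonpos hw <| h.mono fun x hx ↦ by
    have : x * ((∫ u in (0 : ℝ)..x, u * w u) * (x * w x)) = -(τ x * (x * w x) ^ 2) := by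
      linear_combination (x * (x * w x)) * hx
    rw [this]
    exact neg_nonpos.2 (mul_nonneg (hτ x) (sq_nonneg _))
  filter_upwards [ae_eq_zero_of_primitive_eq_zero hw hprim, volume.ae_ne 0] with x hx hx₀
  exact (mul_eq_zero.1 hx).resolve_left hx₀

end Primitive

section BoundedTest

lemma DensityContinuous.exists_hasCompactSupport_primitive {g : ℝ → ℝ} {M : ℝ}
    (hg : DensityContinuous volume g) (hgm : Measurable g) (hM : ∀ x, |g x| ≤ M)
    (hgc : HasCompactSupport g) (hg_zero : ∫ x, g x = 0) :
    ∃ F : ℝ → ℝ, (∀ x, HasDerivAt F (g x) x) ∧ HasCompactSupport F ∧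
      ∀ r, LocallyIntegrable r → ∫ x, F x * r x = -∫ x, g x * ∫ t in (0 : ℝ)..x, r t := by
  have hg_int : Integrable g :=
    integrable_of_hasCompactSupport_of_locallyIntegrable (locallyIntegrable_of_abs_le hgm hM) hgc
  obtain ⟨R, hR⟩ := hgc.isCompact.isBounded.subset_closedBall (0 : ℝ)
  have hsupp : Function.support g ⊆ Ioc (-R - 1) R := fun x hx ↦ by
    have := abs_le.1 (mem_closedBall_zero_iff.1 (hR (subset_tsupport g hx)))
    exact ⟨by linarith, this.2⟩
  refine ⟨fun x ↦ ∫ t in (-R - 1)..x, g t, fun x ↦ ?_,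
    .of_support_subset_isCompact isCompact_Icc
      ((support_primitive_subset hsupp hg_zero).trans Ioc_subset_Icc_self),
    fun r hr ↦ integral_primitive_mul_eq_neg hg_int hr hsupp hg_zero 0⟩
  simpa only [intervalIntegral.integral_interval_sub_left hg_int.intervalIntegrable
    hg_int.intervalIntegrable] using
    (hg.hasDerivAt_integral hgm hM x).sub_const (∫ t in (0 : ℝ)..(-R - 1), g t)

end BoundedTest

section SteinIdentity

lemma integral_withDensity_ofReal {α : Type*} [MeasurableSpace α] {μ : Measure α} {p : α → ℝ}
    (hpm : Measurable p) (hp : ∀ x, 0 ≤ p x) (f : α → ℝ) :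
    ∫ x, f x ∂μ.withDensity (fun x ↦ ENNReal.ofReal (p x)) = ∫ x, p x * f x ∂μ := by
  rw [integral_withDensity_eq_integral_toReal_smul hpm.ennreal_ofReal (by simp)]
  simp only [ENNReal.toReal_ofReal (hp _), smul_eq_mul]

/-- Stein's identity `∫ (τ f' - x f) dμ = 0`, tested on every everywhere differentiable `f` for
which `τ f'` and `x f` are bounded; the derivative is carried as a separate function `f'`. -/
def SteinIdentity (τ : ℝ → ℝ) (μ : Measure ℝ) : Prop :=
  ∀ f f' : ℝ → ℝ, (∀ x, HasDerivAt f (f' x) x) → (∃ M, ∀ x, |τ x * f' x| + |x * f x| ≤ M) →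
    ∫ x, (τ x * f' x - x * f x) ∂μ = 0

variable {τ q g : ℝ → ℝ}

lemma steinIdentity_map {Ω : Type*} [MeasurableSpace Ω] {P : Measure Ω} {Y : Ω → ℝ}
    (hτ : Measurable τ) (hY : Measurable Y)
    (h : ∀ f f' : ℝ → ℝ, (∀ x, HasDerivAt f (f' x) x) →
      (∃ M, ∀ x, |τ x * f' x| + |x * f x| ≤ M) →
      ∫ ω, (τ (Y ω) * f' (Y ω) - Y ω * f (Y ω)) ∂P = 0) :
    SteinIdentity τ (P.map Y) := by
  intro f f' hf hbound
  have hf_meas : Measurable f :=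
    (continuous_iff_continuousAt.2 fun x ↦ (hf x).continuousAt).measurable
  have hf'_meas : Measurable f' := by
    rw [show f' = deriv f from funext fun x ↦ (hf x).deriv.symm]
    exact measurable_deriv f
  rw [integral_map hY.aemeasurable (by fun_prop)]
  exact h f f' hf hbound

lemma SteinIdentity.integral_mul_add_primitive_eq_zero (hqm : Measurable q) (hq : Integrable q)
    (hq_nonneg : ∀ x, 0 ≤ q x) (hτ : Measurable τ)
    (hst : SteinIdentity τ (volume.withDensity fun x ↦ ENNReal.ofReal (q x)))
    (hg : DensityContinuous volume g) (hgm : Measurable g) (hgc : HasCompactSupport g)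
    {M N : ℝ} (hM : ∀ x, |g x| ≤ M) (hN : ∀ x, |τ x * g x| ≤ N) (hg_zero : ∫ x, g x = 0) :
    ∫ x, g x * (τ x * q x + ∫ u in (0 : ℝ)..x, u * q u) = 0 := by
  have hr : LocallyIntegrable fun u ↦ u * q u := hq.locallyIntegrable.continuous_mul continuous_id
  obtain ⟨F, hF_deriv, hF_supp, hF_parts⟩ :=
    hg.exists_hasCompactSupport_primitive hgm hM hgc hg_zero
  have hF_cont : Continuous F := continuous_iff_continuousAt.2 fun x ↦ (hF_deriv x).continuousAt
  obtain ⟨C, hC⟩ := (continuous_id.mul hF_cont).bounded_above_of_compact_support hF_supp.mul_left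
  have hqτg : Integrable fun x ↦ q x * (τ x * g x) :=
    hq.mul_bdd (hτ.mul hgm).aestronglyMeasurable (.of_forall hN)
  have hqxF : Integrable fun x ↦ q x * (x * F x) :=
    hq.mul_bdd (continuous_id.mul hF_cont).aestronglyMeasurable (.of_forall hC)
  have hgR : Integrable fun x ↦ g x * ∫ u in (0 : ℝ)..x, u * q u :=
    integrable_of_hasCompactSupport_of_locallyIntegrable
      ((locallyIntegrable_of_abs_le hgm hM).mul_continuous
        (intervalIntegral.continuous_primitive (intervalIntegrable_of_locallyIntegrable hr) 0))
      hgc.mul_right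
  calc ∫ x, g x * (τ x * q x + ∫ u in (0 : ℝ)..x, u * q u)
      = (∫ x, q x * (τ x * g x)) + ∫ x, g x * ∫ u in (0 : ℝ)..x, u * q u := by
        rw [← integral_add hqτg hgR]
        exact integral_congr_ae (.of_forall fun x ↦ by ring)
    _ = (∫ x, q x * (τ x * g x)) - ∫ x, q x * (x * F x) := by
        rw [sub_eq_add_neg, ← neg_eq_iff_eq_neg.2 (hF_parts _ hr)]
        simp only [mul_comm, mul_left_comm]
    _ = 0 := by
        rw [← integral_sub hqτg hqxF]
        simp only [← mul_sub]
        rw [← integral_withDensity_ofReal hqm hq_nonneg]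
        exact hst F g hF_deriv ⟨N + C, fun x ↦ add_le_add (hN x) (hC x)⟩

lemma SteinIdentity.exists_ae_mul_eq_sub_primitive (hqm : Measurable q) (hq : Integrable q)
    (hq_nonneg : ∀ x, 0 ≤ q x) (hτ : Measurable τ)
    (hst : SteinIdentity τ (volume.withDensity fun x ↦ ENNReal.ofReal (q x))) :
    ∃ c : ℝ, ∀ᵐ x, τ x * q x = c - ∫ u in (0 : ℝ)..x, u * q u := by
  obtain ⟨s, hsm, hs, hs_nonneg, hs_le, hs_pos⟩ := exists_densityContinuous_weight (μ := volume)
    (w := fun x ↦ max 1 |τ x|) (measurable_const.max hτ.abs) fun x ↦ le_max_left _ _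
  have hs_one (x : ℝ) : |s x| ≤ 1 := by
    rw [abs_of_nonneg (hs_nonneg x)]
    exact (le_mul_of_one_le_left (hs_nonneg x) (le_max_left _ _)).trans (hs_le x)
  have hτs (x : ℝ) : |τ x * s x| ≤ 1 := by
    rw [abs_mul, abs_of_nonneg (hs_nonneg x)]
    exact (mul_le_mul_of_nonneg_right (le_max_right _ _) (hs_nonneg x)).trans (hs_le x)
  have hs_loc : LocallyIntegrable s := locallyIntegrable_of_abs_le hsm hs_one
  set R : ℝ → ℝ := fun x ↦ ∫ u in (0 : ℝ)..x, u * q u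
  have hR_cont : Continuous R := intervalIntegral.continuous_primitive
    (fun _ _ ↦ hq.intervalIntegrable.continuousOn_mul continuous_id.continuousOn) 0
  have hf_loc : LocallyIntegrable fun x ↦ s x * (τ x * q x + R x) := by
    have hqτs : Integrable fun x ↦ q x * (τ x * s x) :=
      hq.mul_bdd (hτ.mul hsm).aestronglyMeasurable (.of_forall hτs)
    refine (hqτs.locallyIntegrable.add (hs_loc.mul_continuous hR_cont)).congr
      (.of_forall fun x ↦ ?_)
    simp only [Pi.add_apply]
    ring
  obtain ⟨c, hc⟩ := exists_ae_eq_mul_of_forall_contDiff_integral_mul_eq_zero hf_loc hs_loc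
    fun ψ hψ hψc hψs ↦ by
      obtain ⟨C, hC⟩ := hψ.continuous.bounded_above_of_compact_support hψc
      have hbound {a : ℝ} (ha : |a| ≤ 1) (x : ℝ) : |ψ x * a| ≤ C := by
        rw [abs_mul]
        exact (mul_le_of_le_one_right (abs_nonneg _) ha).trans (hC x)
      simpa only [mul_assoc] using hst.integral_mul_add_primitive_eq_zero hqm hq hq_nonneg hτ
        ((densityContinuous_of_continuous hψ.continuous).mul hs)
        (hψ.continuous.measurable.mul hsm) hψc.mul_right (fun x ↦ hbound (hs_one x) x)
        (fun x ↦ by simpa only [mul_left_comm] using hbound (hτs x) x) hψs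
  refine ⟨c, ?_⟩
  filter_upwards [hc, hs_pos] with x hx hsx
  rw [mul_comm] at hx
  linarith [mul_right_cancel₀ hsx.ne' hx]

end SteinIdentity

section SteinKernel

/-- The tail first moment `x ↦ ∫_x^∞ y p(y) dy` of a density `p`. -/
noncomputable def tailMoment (p : ℝ → ℝ) (x : ℝ) : ℝ := ∫ y in Ioi x, y * p y

/-- The Stein kernel `x ↦ (∫_x^∞ y p(y) dy) / p(x)` of a density `p`. The indicator of the support
is implicit: `p` vanishes off it, so the quotient takes the junk value `0` there. -/
noncomputable def steinKernel (p : ℝ → ℝ) (x : ℝ) : ℝ := tailMoment p x / p x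

variable {p : ℝ → ℝ}

lemma tailMoment_eq_sub_primitive (hint : Integrable fun y ↦ y * p y) (x : ℝ) :
    tailMoment p x = tailMoment p 0 - ∫ y in (0 : ℝ)..x, y * p y := by
  have := intervalIntegral.integral_Ioi_sub_Ioi' (a := 0) (b := x) hint.integrableOn
    hint.integrableOn
  simp only [tailMoment]
  linarith

lemma tailMoment_eq_neg_integral_Iic (hint : Integrable fun y ↦ y * p y)
    (hmean : ∫ y, y * p y = 0) (x : ℝ) : tailMoment p x = -∫ y in Iic x, y * p y := by
  have := intervalIntegral.integral_Iic_add_Ioi (b := x) hint.integrableOn hint.integrableOn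
  simp only [tailMoment]
  linarith

lemma tailMoment_nonneg (hp : ∀ x, 0 ≤ p x) (hint : Integrable fun y ↦ y * p y)
    (hmean : ∫ y, y * p y = 0) (x : ℝ) : 0 ≤ tailMoment p x := by
  rcases le_total 0 x with hx | hx
  · exact setIntegral_nonneg measurableSet_Ioi fun y hy ↦ mul_nonneg (hx.trans hy.le) (hp y)
  · rw [tailMoment_eq_neg_integral_Iic hint hmean, neg_nonneg]
    exact setIntegral_nonpos measurableSet_Iic fun y hy ↦
      mul_nonpos_of_nonpos_of_nonneg (hy.trans hx) (hp y)

lemma tailMoment_zero_pos (hp : ∀ x, 0 ≤ p x) (hint : Integrable fun y ↦ y * p y)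
    (hsupp : Function.support p ∈ 𝓝 0) : 0 < tailMoment p 0 := by
  obtain ⟨δ, hδ, hball⟩ := Metric.mem_nhds_iff.1 hsupp
  have hsub : Ioo 0 δ ⊆ (Function.support fun y ↦ y * p y) ∩ Ioi 0 := fun y hy ↦
    ⟨mul_ne_zero hy.1.ne' (hball (by simpa [abs_of_pos hy.1] using hy.2)), hy.1⟩
  refine (setIntegral_pos_iff_support_of_nonneg_ae ?_ hint.integrableOn).2
    (lt_of_lt_of_le (by simpa using hδ) (measure_mono hsub))
  exact (ae_restrict_mem measurableSet_Ioi).mono fun y hy ↦ mul_nonneg (mem_Ioi.1 hy).le (hp y)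

lemma tailMoment_eq_zero_of_notMem_support (hint : Integrable fun y ↦ y * p y)
    (hmean : ∫ y, y * p y = 0) (hsupp : (Function.support p).OrdConnected)
    (h0 : (0 : ℝ) ∈ Function.support p) {x : ℝ} (hx : x ∉ Function.support p) :
    tailMoment p x = 0 := by
  rcases le_total 0 x with h0x | hx0
  · exact setIntegral_eq_zero_of_forall_eq_zero fun y hy ↦ by
      rw [Function.notMem_support.1 fun h ↦ hx (hsupp.out h0 h ⟨h0x, hy.le⟩), mul_zero]
  · rw [tailMoment_eq_neg_integral_Iic hint hmean, neg_eq_zero]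
    exact setIntegral_eq_zero_of_forall_eq_zero fun y hy ↦ by
      rw [Function.notMem_support.1 fun h ↦ hx (hsupp.out h h0 ⟨hy, hx0⟩), mul_zero]

lemma steinKernel_mul_self (hint : Integrable fun y ↦ y * p y)
    (hmean : ∫ y, y * p y = 0) (hsupp : (Function.support p).OrdConnected)
    (h0 : (0 : ℝ) ∈ Function.support p) (x : ℝ) : steinKernel p x * p x = tailMoment p x :=
  div_mul_cancel_of_imp fun hx ↦
    tailMoment_eq_zero_of_notMem_support hint hmean hsupp h0 (Function.notMem_support.2 hx)

lemma measurable_steinKernel (hpm : Measurable p) (hint : Integrable fun y ↦ y * p y) :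
    Measurable (steinKernel p) := by
  have htail : Continuous (tailMoment p) := by
    rw [funext (tailMoment_eq_sub_primitive hint)]
    exact continuous_const.sub
      (intervalIntegral.continuous_primitive (fun _ _ ↦ hint.intervalIntegrable) 0)
  exact htail.measurable.div hpm

lemma SteinIdentity.exists_ae_eq_mul {q : ℝ → ℝ} (hpm : Measurable p) (hp : ∀ x, 0 ≤ p x)
    (hint : Integrable fun y ↦ y * p y) (hmean : ∫ y, y * p y = 0)
    (hsupp : (Function.support p).OrdConnected) (h0 : Function.support p ∈ 𝓝 0)
    (hqm : Measurable q) (hq : Integrable q) (hq_nonneg : ∀ x, 0 ≤ q x)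
    (hst : SteinIdentity (steinKernel p) (volume.withDensity fun x ↦ ENNReal.ofReal (q x))) :
    ∃ k : ℝ, ∀ᵐ x, q x = k * p x := by
  obtain ⟨c, hc⟩ := hst.exists_ae_mul_eq_sub_primitive hqm hq hq_nonneg
    (measurable_steinKernel hpm hint)
  set k := c / tailMoment p 0
  have hk : k * tailMoment p 0 = c := div_mul_cancel₀ _ (tailMoment_zero_pos hp hint h0).ne'
  have hq_loc : LocallyIntegrable fun u ↦ u * q u :=
    hq.locallyIntegrable.continuous_mul continuous_id
  have hsplit (u : ℝ) : u * (q u - k * p u) = u * q u - k * (u * p u) := by ring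
  have hprim (x : ℝ) : ∫ u in (0 : ℝ)..x, u * (q u - k * p u) =
      (∫ u in (0 : ℝ)..x, u * q u) - k * ∫ u in (0 : ℝ)..x, u * p u := by
    simp only [hsplit]
    rw [intervalIntegral.integral_sub (intervalIntegrable_of_locallyIntegrable hq_loc 0 x)
      (hint.const_mul k).intervalIntegrable, intervalIntegral.integral_const_mul]
  have hw_loc : LocallyIntegrable fun u ↦ u * (q u - k * p u) := by
    simp only [hsplit]
    exact hq_loc.sub (hint.const_mul k).locallyIntegrable
  have hzero := ae_eq_zero_of_mul_eq_neg_primitive (τ := steinKernel p)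
    (w := fun x ↦ q x - k * p x)
    (fun x ↦ div_nonneg (tailMoment_nonneg hp hint hmean x) (hp x)) hw_loc
    (hc.mono fun x hx ↦ by
      have hself := steinKernel_mul_self hint hmean hsupp (mem_of_mem_nhds h0) x
      rw [tailMoment_eq_sub_primitive hint] at hself
      rw [hprim]
      linear_combination hx - k * hself - hk)
  exact ⟨k, hzero.mono fun x hx ↦ sub_eq_zero.1 hx⟩

lemma exists_integrable_density {α : Type*} [MeasurableSpace α] {μ ν : Measure α}
    [IsFiniteMeasure μ] [SigmaFinite ν] (h : μ ≪ ν) :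
    ∃ q : α → ℝ, Measurable q ∧ Integrable q ν ∧ (∀ x, 0 ≤ q x) ∧
      μ = ν.withDensity fun x ↦ ENNReal.ofReal (q x) := by
  refine ⟨fun x ↦ (μ.rnDeriv ν x).toReal, (Measure.measurable_rnDeriv μ ν).ennreal_toReal,
    Measure.integrable_toReal_rnDeriv, fun _ ↦ ENNReal.toReal_nonneg, ?_⟩
  rw [withDensity_congr_ae (ofReal_toReal_ae_eq (μ.rnDeriv_lt_top ν)),
    Measure.withDensity_rnDeriv_eq μ ν h]

lemma SteinIdentity.eq_withDensity {μ : Measure ℝ} [IsProbabilityMeasure μ]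
    [IsProbabilityMeasure (volume.withDensity fun x ↦ ENNReal.ofReal (p x))]
    (hst : SteinIdentity (steinKernel p) μ) (hμ : μ ≪ volume) (hpm : Measurable p)
    (hp : ∀ x, 0 ≤ p x) (hint : Integrable fun y ↦ y * p y) (hmean : ∫ y, y * p y = 0)
    (hsupp : (Function.support p).OrdConnected) (h0 : Function.support p ∈ 𝓝 0) :
    μ = volume.withDensity fun x ↦ ENNReal.ofReal (p x) := by
  obtain ⟨q, hqm, hq, hq_nonneg, hμq⟩ := exists_integrable_density hμ
  obtain ⟨k, hk⟩ := (hμq ▸ hst).exists_ae_eq_mul hpm hp hint hmean hsupp h0 hqm hq hq_nonneg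
  have hμk : μ = ENNReal.ofReal k • volume.withDensity fun x ↦ ENNReal.ofReal (p x) := by
    rw [← withDensity_smul _ hpm.ennreal_ofReal, hμq]
    refine withDensity_congr_ae (hk.mono fun x hx ↦ ?_)
    simp only [hx, ENNReal.ofReal_mul' (hp x), Pi.smul_apply, smul_eq_mul]
  have hk_one : ENNReal.ofReal k = 1 := by
    simpa using (congrArg (fun ν : Measure ℝ ↦ ν univ) hμk).symm
  rw [hμk, hk_one, one_smul]

lemma integrable_mul_density_of_map_eq {Ω : Type*} [MeasurableSpace Ω] {P : Measure Ω} {X : Ω → ℝ}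
    (hXm : Measurable X) (hX : Integrable X P) (hpm : Measurable p) (hp : ∀ x, 0 ≤ p x)
    (hdens : P.map X = volume.withDensity fun x ↦ ENNReal.ofReal (p x)) :
    Integrable fun y ↦ y * p y := by
  have hid : Integrable id (P.map X) :=
    (integrable_map_measure measurable_id.aestronglyMeasurable hXm.aemeasurable).2 hX
  rw [hdens, integrable_withDensity_iff hpm.ennreal_ofReal (by simp)] at hid
  simpa only [id, ENNReal.toReal_ofReal (hp _)] using hid

lemma integral_mul_density_of_map_eq {Ω : Type*} [MeasurableSpace Ω] {P : Measure Ω} {X : Ω → ℝ}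
    (hXm : Measurable X) (hpm : Measurable p) (hp : ∀ x, 0 ≤ p x)
    (hdens : P.map X = volume.withDensity fun x ↦ ENNReal.ofReal (p x)) :
    ∫ y, y * p y = ∫ ω, X ω ∂P := by
  simp only [mul_comm _ (p _)]
  rw [← integral_withDensity_ofReal hpm hp, ← hdens,
    integral_map hXm.aemeasurable measurable_id'.aestronglyMeasurable]

end SteinKernel

/-- Stein characterization: if `Z` has a centered integrable density `p` supported on `(a,b)`
with associated `τ` satisfying the divergence conditions `∫₀^b y/τ = +∞`, `∫_a^0 y/τ = −∞`,
and if `Y` has an absolutely continuous law and satisfies `E[τ(Y) f'(Y) − Y f(Y)] = 0` for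
every differentiable `f` making `x ↦ |τ(x) f'(x)| + |x f(x)|` bounded, then `Y` has the same
law as `Z`. -/
theorem stein_characterization_general_density
    {Ω : Type*} [MeasurableSpace Ω] (P : Measure Ω) [IsProbabilityMeasure P]
    {Ω' : Type*} [MeasurableSpace Ω'] (P' : Measure Ω') [IsProbabilityMeasure P']
    (Z : Ω → ℝ) (hZmeas : Measurable Z)
    (p : ℝ → ℝ) (hpmeas : Measurable p) (hp0 : ∀ x, 0 ≤ p x)
    (hdens : P.map Z = volume.withDensity (fun x => ENNReal.ofReal (p x)))
    (a b : EReal) (ha : a < 0) (hb : 0 < b)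
    (hsupp : ∀ x : ℝ, 0 < p x ↔ (a < (x : EReal) ∧ (x : EReal) < b))
    (hZint : Integrable Z P) (hZmean : ∫ ω, Z ω ∂P = 0)
    (τ : ℝ → ℝ)
    (hτ : ∀ x : ℝ, τ x =
      if a < (x : EReal) ∧ (x : EReal) < b then (∫ y in Set.Ioi x, y * p y) / p x
      else 0)
    (hdiv_pos : ∫⁻ y in {y : ℝ | 0 < y ∧ (y : EReal) < b},
      ENNReal.ofReal (y / τ y) = ⊤)
    (hdiv_neg : ∫⁻ y in {y : ℝ | a < (y : EReal) ∧ y < 0},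
      ENNReal.ofReal (-y / τ y) = ⊤)
    (Y : Ω' → ℝ) (hYmeas : Measurable Y)
    (hYabs : P'.map Y ≪ (volume : Measure ℝ))
    (hstein : ∀ f f' : ℝ → ℝ, (∀ x, HasDerivAt f (f' x) x) →
      (∃ M, ∀ x : ℝ, |τ x * f' x| + |x * f x| ≤ M) →
      ∫ ω, (τ (Y ω) * f' (Y ω) - Y ω * f (Y ω)) ∂P' = 0) :
    P'.map Y = P.map Z := by
  have hp_supp : Function.support p = Real.toEReal ⁻¹' Ioo a b :=
    Set.ext fun x ↦ (hp0 x).lt_iff_ne'.symm.trans (hsupp x)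
  have hτ_kernel : τ = steinKernel p := funext fun x ↦ by
    rw [hτ]
    split_ifs with hx
    · rfl
    · rw [steinKernel, Function.notMem_support.1 (show x ∉ Function.support p from hp_supp ▸ hx),
        div_zero]
  have hint : Integrable fun y ↦ y * p y :=
    integrable_mul_density_of_map_eq hZmeas hZint hpmeas hp0 hdens
  have hmean : ∫ y, y * p y = 0 :=
    (integral_mul_density_of_map_eq hZmeas hpmeas hp0 hdens).trans hZmean
  have hY : SteinIdentity (steinKernel p) (P'.map Y) :=
    steinIdentity_map (measurable_steinKernel hpmeas hint) hYmeas (hτ_kernel ▸ hstein)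
  have : IsProbabilityMeasure (P'.map Y) := Measure.isProbabilityMeasure_map hYmeas.aemeasurable
  have : IsProbabilityMeasure (volume.withDensity fun x ↦ ENNReal.ofReal (p x)) :=
    hdens ▸ Measure.isProbabilityMeasure_map hZmeas.aemeasurable
  rw [hdens]
  refine hY.eq_withDensity hYabs hpmeas hp0 hint hmean ?_ ?_ <;> rw [hp_supp]
  · exact ordConnected_Ioo.preimage_mono EReal.coe_strictMono.monotone
  · exact (isOpen_Ioo.preimage continuous_coe_real_ereal).mem_nhds ⟨ha, hb⟩
end
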